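/- Let α ∈ (0,∞) and let 2 ≤ q, r ≤ ∞ satisfy 3/q + 1/r ≤ 1/2 if α ∈ (1,∞), and 2/q + 1/r ≤ 1/2 if α ∈ (0,1]. Then there exists a constant C > 0 such that (∫_ℝ ‖U(t)φ‖_{ℓ^r(Z)}^q dt)^{1/q} ≤ C ‖φ‖_{ℓ²(Z)} for all φ ∈ ℓ²(Z) (with the essential-supremum interpretation when q = ∞). -/

import Mathlib

open scoped BigOperators ENNReal
open Filter Topology MeasureTheory

noncomputable section

/-- The symbol `σ(ξ) = Σ_{k=1}^∞ sin²(kξ/2) / k^{1+α}` for `J_k = k^{-(1+α)}` on `ℤ`. -/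
def sigma1 (α : ℝ) (ξ : ℝ) : ℝ :=
  ∑' k : ℕ, Real.sin (((k : ℝ) + 1) * ξ / 2) ^ 2 / ((k : ℝ) + 1) ^ (1 + α)

/-- The kernel `(K_t)_n = (1/(2π)) ∫_{-π}^{π} e^{i(nξ - σ(ξ)t)} dξ`. -/
def Kker (α t : ℝ) (n : ℤ) : ℂ :=
  (2 * Real.pi)⁻¹ •
    ∫ ξ in (-Real.pi)..Real.pi, Complex.exp (Complex.I * (((n : ℝ) * ξ - sigma1 α ξ * t) : ℝ))

/-- The propagator `(U(t)φ)_n = Σ_m (K_t)_{n-m} φ_m`. -/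
def Uprop (α t : ℝ) (φ : ℤ → ℂ) (n : ℤ) : ℂ :=
  ∑' m : ℤ, Kker α t (n - m) * φ m

/-- The `ℓ^r(ℤ)` norm for `r ∈ [1,∞]`, valued in `ℝ≥0∞`. -/
def lrNormZ (r : ℝ≥0∞) (g : ℤ → ℂ) : ℝ≥0∞ :=
  if r = ⊤ then ⨆ n : ℤ, (‖g n‖₊ : ℝ≥0∞)
  else (∑' n : ℤ, (‖g n‖₊ : ℝ≥0∞) ^ r.toReal) ^ (1 / r.toReal)

/-- The space-time norm `‖u‖_{L^q_t ℓ^r}` over `t ∈ ℝ`, valued in `ℝ≥0∞`. -/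
def LqLrNorm (q r : ℝ≥0∞) (u : ℝ → ℤ → ℂ) : ℝ≥0∞ :=
  if q = ⊤ then essSup (fun t : ℝ => lrNormZ r (u t)) volume
  else (∫⁻ t : ℝ, (lrNormZ r (u t)) ^ q.toReal) ^ (1 / q.toReal)

/-- oscillating exponential -/
def osc (f : ℝ → ℝ) (x : ℝ) : ℂ := Complex.exp (Complex.I * (f x : ℂ))

lemma norm_osc (f : ℝ → ℝ) (x : ℝ) : ‖osc f x‖ = 1 := by
  unfold osc; rw [mul_comm]; exact Complex.norm_exp_ofReal_mul_I _

lemma osc_cont {f : ℝ → ℝ} (h : Continuous f) : Continuous (osc f) := by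
  unfold osc; fun_prop

lemma osc_triv (f : ℝ → ℝ) (a b : ℝ) (hab : a ≤ b) : ‖∫ x in a..b, osc f x‖ ≤ b - a := by
  have := intervalIntegral.norm_integral_le_of_norm_le_const (a := a) (b := b) (C := 1) (f := osc f)
    (fun x _ => (norm_osc f x).le)
  rwa [one_mul, abs_of_nonneg (by linarith)] at this

lemma vdc1 (f f' f'' : ℝ → ℝ) (hf : ∀ x, HasDerivAt f (f' x) x) (hf' : ∀ x, HasDerivAt f' (f'' x) x)
    (hc : Continuous f'') (a b : ℝ) (hab : a ≤ b) (hpos : ∀ x ∈ Set.Icc a b, 0 ≤ f'' x)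
    (mu : ℝ) (hmu : 0 < mu) (hlow : ∀ x ∈ Set.Icc a b, mu ≤ f' x) :
    ‖∫ x in a..b, osc f x‖ ≤ 3 / mu := by
  have cf : Continuous f := continuous_iff_continuousAt.2 fun x => (hf x).continuousAt
  have cf' : Continuous f' := continuous_iff_continuousAt.2 fun x => (hf' x).continuousAt
  have hne : ∀ x ∈ Set.uIcc a b, f' x ≠ 0 := by
    intro x hx; rw [Set.uIcc_of_le hab] at hx; have := hlow x hx; linarith
  have hneC : ∀ x ∈ Set.uIcc a b, (f' x : ℂ) ≠ 0 := fun x hx => by exact_mod_cast hne x hx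
  have hoD : ∀ x, HasDerivAt (osc f) (osc f x * (Complex.I * f' x)) x := by
    intro x
    exact (((hf x).ofReal_comp).const_mul Complex.I).cexp
  have hGD : ∀ x ∈ Set.uIcc a b, HasDerivAt (fun x => osc f x / (Complex.I * f' x))
      (osc f x - osc f x * (f'' x / (Complex.I * (f' x) ^ 2))) x := by
    intro x hx
    have h := (hoD x).div (((hf' x).ofReal_comp).const_mul Complex.I) (mul_ne_zero Complex.I_ne_zero (hneC x hx))
    have := hneC x hx
    have hI := Complex.I_ne_zero
    refine h.congr_deriv ?_
    field_simp
    try ring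
  have hcr : ContinuousOn (fun x => osc f x * (f'' x / (Complex.I * (f' x) ^ 2))) (Set.uIcc a b) := by
    apply ContinuousOn.mul (osc_cont cf).continuousOn
    apply ContinuousOn.div (by fun_prop) (by fun_prop)
    intro x hx
    exact mul_ne_zero Complex.I_ne_zero (pow_ne_zero _ (hneC x hx))
  have hintg := intervalIntegral.integral_eq_sub_of_hasDerivAt hGD
    (((osc_cont cf).continuousOn.sub hcr).intervalIntegrable)
  rw [intervalIntegral.integral_sub ((osc_cont cf).intervalIntegrable _ _) hcr.intervalIntegrable] at hintg
  have hinv : ∫ x in a..b, f'' x / (f' x) ^ 2 = 1 / f' a - 1 / f' b := by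
    have hD : ∀ x ∈ Set.uIcc a b, HasDerivAt (fun x => - (1 / f' x)) (f'' x / (f' x) ^ 2) x := by
      intro x hx
      have h := ((hf' x).inv (hne x hx)).neg
      have e : (fun x => - (1 / f' x)) = (-f'⁻¹) := by ext x; simp
      rw [e]
      refine h.congr_deriv ?_
      ring
    rw [intervalIntegral.integral_eq_sub_of_hasDerivAt hD]
    · ring
    · apply ContinuousOn.intervalIntegrable
      exact ContinuousOn.div (by fun_prop) (by fun_prop) (fun x hx => pow_ne_zero _ (hne x hx))
  have hb1 : ‖∫ x in a..b, osc f x * (f'' x / (Complex.I * (f' x) ^ 2))‖ ≤ 1 / f' a - 1 / f' b := by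
    rw [← hinv]
    refine (intervalIntegral.norm_integral_le_integral_norm hab).trans (le_of_eq ?_)
    apply intervalIntegral.integral_congr
    intro x hx
    have hx' := hx
    rw [Set.uIcc_of_le hab] at hx'
    simp only [norm_mul, norm_osc, norm_div, norm_pow, Complex.norm_real, Complex.norm_I, one_mul,
      Real.norm_eq_abs, sq_abs, abs_of_nonneg (hpos x hx')]
  have hG : ∀ x ∈ Set.Icc a b, ‖osc f x / (Complex.I * f' x)‖ ≤ 1 / mu := by
    intro x hx
    have h1 := hlow x hx
    rw [norm_div, norm_osc, norm_mul, Complex.norm_I, one_mul, Complex.norm_real, Real.norm_eq_abs,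
      abs_of_pos (by linarith)]
    exact one_div_le_one_div_of_le hmu h1
  have e : ∫ x in a..b, osc f x = (osc f b / (Complex.I * f' b) - osc f a / (Complex.I * f' a)) +
      ∫ x in a..b, osc f x * (f'' x / (Complex.I * (f' x) ^ 2)) := by
    rw [← hintg]; ring
  have ha := hG a (Set.left_mem_Icc.2 hab)
  have hb := hG b (Set.right_mem_Icc.2 hab)
  have ha2 : 1 / f' a ≤ 1 / mu := one_div_le_one_div_of_le hmu (hlow a (Set.left_mem_Icc.2 hab))
  have hb2 : 0 < 1 / f' b := by
    have : 0 < f' b := hmu.trans_le (hlow b (Set.right_mem_Icc.2 hab))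
    positivity
  rw [e]
  calc _ ≤ ‖osc f b / (Complex.I * f' b)‖ + ‖osc f a / (Complex.I * f' a)‖ + (1 / f' a - 1 / f' b) := by
        refine (norm_add_le _ _).trans ?_
        gcongr
        exact norm_sub_le _ _
    _ ≤ 1 / mu + 1 / mu + 1 / mu := by linarith
    _ = 3 / mu := by ring

/-- second derivative test, increasing half -/
lemma vdc2half (f f' f'' : ℝ → ℝ) (hf : ∀ x, HasDerivAt f (f' x) x) (hf' : ∀ x, HasDerivAt f' (f'' x) x)
    (hc : Continuous f'') (a b : ℝ) (hab : a ≤ b) (lam : ℝ) (hlam : 0 < lam)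
    (hpos : ∀ x ∈ Set.Icc a b, lam ≤ f'' x) (h0 : 0 ≤ f' a) :
    ‖∫ x in a..b, osc f x‖ ≤ 4 / √lam := by
  have cf : Continuous f := continuous_iff_continuousAt.2 fun x => (hf x).continuousAt
  have hs : 0 < √lam := Real.sqrt_pos.2 hlam
  have hsq : √lam * √lam = lam := Real.mul_self_sqrt hlam.le
  have hgrow : ∀ x ∈ Set.Icc a b, lam * (x - a) ≤ f' x := by
    intro x hx
    have hm : MonotoneOn (fun x => f' x - lam * x) (Set.Icc a b) := by
      apply monotoneOn_of_deriv_nonneg (convex_Icc a b)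
      · have cf' : Continuous f' := continuous_iff_continuousAt.2 fun x => (hf' x).continuousAt
        fun_prop
      · intro x hx
        exact ((hf' x).sub ((hasDerivAt_id x).const_mul lam)).differentiableAt.differentiableWithinAt
      · intro x hx
        have := ((hf' x).sub ((hasDerivAt_id' x).const_mul lam)).deriv
        have e : deriv (fun x => f' x - lam * x) x = f'' x - lam * 1 := this
        rw [e]
        have := hpos x (interior_subset hx)
        linarith
    have := hm (Set.left_mem_Icc.2 hab) hx hx.1
    simp only at this
    nlinarith
  set d := 1 / √lam with hd
  have hdp : 0 < d := by positivity
  by_cases hbd : b ≤ a + d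
  · refine (osc_triv f a b hab).trans ?_
    have : b - a ≤ 1 / √lam := by linarith
    refine this.trans ?_
    gcongr; norm_num
  push Not at hbd
  have ci := osc_cont cf
  rw [← intervalIntegral.integral_add_adjacent_intervals (ci.intervalIntegrable a (a + d)) (ci.intervalIntegrable (a + d) b)]
  have h1 := osc_triv f a (a + d) (by linarith)
  have h2 := vdc1 f f' f'' hf hf' hc (a + d) b hbd.le
    (fun x hx => hlam.le.trans (hpos x ⟨by linarith [hx.1], hx.2⟩)) (√lam) hs
    (fun x hx => by
      have := hgrow x ⟨by linarith [hx.1], hx.2⟩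
      have h3 : lam * d = √lam := by rw [hd]; nth_rewrite 1 [← hsq]; field_simp
      have h4 : d ≤ x - a := by linarith [hx.1]
      nlinarith)
  calc _ ≤ _ := norm_add_le _ _
    _ ≤ d + 3 / √lam := by linarith
    _ = 4 / √lam := by rw [hd]; ring

lemma vdc2half' (f f' f'' : ℝ → ℝ) (hf : ∀ x, HasDerivAt f (f' x) x) (hf' : ∀ x, HasDerivAt f' (f'' x) x)
    (hc : Continuous f'') (a b : ℝ) (hab : a ≤ b) (lam : ℝ) (hlam : 0 < lam)
    (hpos : ∀ x ∈ Set.Icc a b, lam ≤ f'' x) (h0 : f' b ≤ 0) :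
    ‖∫ x in a..b, osc f x‖ ≤ 4 / √lam := by
  have h := vdc2half (fun x => f (-x)) (fun x => - f' (-x)) (fun x => f'' (-x))
    (fun x => ((hf (-x)).comp x (hasDerivAt_neg x)).congr_deriv (by ring))
    (fun x => ((hf' (-x)).comp x (hasDerivAt_neg x)).neg.congr_deriv (by ring))
    (by fun_prop) (-b) (-a) (by linarith) lam hlam
    (fun x hx => hpos (-x) ⟨by linarith [hx.2], by linarith [hx.1]⟩) (by simpa using h0)
  have e := intervalIntegral.integral_comp_neg (osc f) (a := -b) (b := -a)
  simp only [neg_neg] at e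
  rw [← e]
  exact h

lemma vdc2 (f f' f'' : ℝ → ℝ) (hf : ∀ x, HasDerivAt f (f' x) x) (hf' : ∀ x, HasDerivAt f' (f'' x) x)
    (hc : Continuous f'') (a b : ℝ) (hab : a ≤ b) (lam : ℝ) (hlam : 0 < lam)
    (hpos : ∀ x ∈ Set.Icc a b, lam ≤ f'' x) :
    ‖∫ x in a..b, osc f x‖ ≤ 8 / √lam := by
  have cf : Continuous f := continuous_iff_continuousAt.2 fun x => (hf x).continuousAt
  have cf' : Continuous f' := continuous_iff_continuousAt.2 fun x => (hf' x).continuousAt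
  have hs : 0 < √lam := Real.sqrt_pos.2 hlam
  have h48 : 4 / √lam ≤ 8 / √lam := by gcongr; norm_num
  by_cases ha : 0 ≤ f' a
  · exact (vdc2half f f' f'' hf hf' hc a b hab lam hlam hpos ha).trans h48
  by_cases hb : f' b ≤ 0
  · exact (vdc2half' f f' f'' hf hf' hc a b hab lam hlam hpos hb).trans h48
  push Not at ha hb
  obtain ⟨c, hc1, hc2⟩ := intermediate_value_Icc hab cf'.continuousOn (show (0:ℝ) ∈ Set.Icc (f' a) (f' b) from ⟨ha.le, hb.le⟩)
  have ci := osc_cont cf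
  rw [← intervalIntegral.integral_add_adjacent_intervals (ci.intervalIntegrable a c) (ci.intervalIntegrable c b)]
  have h1 := vdc2half' f f' f'' hf hf' hc a c hc1.1 lam hlam
    (fun x hx => hpos x ⟨hx.1, hx.2.trans hc1.2⟩) hc2.le
  have h2 := vdc2half f f' f'' hf hf' hc c b hc1.2 lam hlam
    (fun x hx => hpos x ⟨hc1.1.trans hx.1, hx.2⟩) hc2.ge
  calc _ ≤ _ := norm_add_le _ _
    _ ≤ 4 / √lam + 4 / √lam := add_le_add h1 h2
    _ = 8 / √lam := by ring

lemma osc_neg_norm (f : ℝ → ℝ) (a b : ℝ) :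
    ‖∫ x in a..b, osc (fun x => - f x) x‖ = ‖∫ x in a..b, osc f x‖ := by
  have : ∫ x in a..b, osc (fun x => - f x) x = (starRingEnd ℂ) (∫ x in a..b, osc f x) := by
    rw [intervalIntegral.intervalIntegral_eq_integral_uIoc, intervalIntegral.intervalIntegral_eq_integral_uIoc]
    have : ∀ x, osc (fun x => - f x) x = (starRingEnd ℂ) (osc f x) := by
      intro x
      unfold osc
      rw [← Complex.exp_conj]
      simp
    simp_rw [this]
    rw [integral_conj]
    split_ifs <;> simp
  rw [this, RCLike.norm_conj]

lemma vdc2neg (f f' f'' : ℝ → ℝ) (hf : ∀ x, HasDerivAt f (f' x) x) (hf' : ∀ x, HasDerivAt f' (f'' x) x)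
    (hc : Continuous f'') (a b : ℝ) (hab : a ≤ b) (lam : ℝ) (hlam : 0 < lam)
    (hpos : ∀ x ∈ Set.Icc a b, f'' x ≤ -lam) :
    ‖∫ x in a..b, osc f x‖ ≤ 8 / √lam := by
  rw [← osc_neg_norm]
  exact vdc2 _ _ _ (fun x => (hf x).neg) (fun x => (hf' x).neg) (by fun_prop) a b hab lam hlam
    (fun x hx => by have := hpos x hx; linarith)
/-- half-circle oscillatory bound with decay rate `lam` -/
def HB (g : ℝ → ℝ) (lam C : ℝ) : Prop :=
  ∀ n t : ℝ, 0 < t → ‖∫ ξ in (0:ℝ)..Real.pi, osc (fun ξ => n * ξ - g ξ * t) ξ‖ ≤ C * t ^ (-lam)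

lemma phase_deriv {g g' : ℝ → ℝ} (hg : ∀ x, HasDerivAt g (g' x) x) (n t : ℝ) (x : ℝ) :
    HasDerivAt (fun ξ => n * ξ - g ξ * t) (n - g' x * t) x :=
  (((hasDerivAt_id' x).const_mul n).sub ((hg x).mul_const t)).congr_deriv (by ring)

lemma phase_deriv2 {g' g'' : ℝ → ℝ} (hg : ∀ x, HasDerivAt g' (g'' x) x) (n t : ℝ) (x : ℝ) :
    HasDerivAt (fun ξ => n - g' ξ * t) (- g'' x * t) x :=
  ((hasDerivAt_const x n).sub ((hg x).mul_const t)).congr_deriv (by ring)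

lemma HB_two (g g' g'' : ℝ → ℝ) (hg : ∀ x, HasDerivAt g (g' x) x) (hg' : ∀ x, HasDerivAt g' (g'' x) x)
    (hc : Continuous g'') (c : ℝ) (hcp : 0 < c) (hb : ∀ x ∈ Set.Icc 0 Real.pi, g'' x ≤ -c) :
    HB g (1/2) (8 / √c) := by
  intro n t ht
  have h := vdc2 _ _ _ (phase_deriv hg n t) (phase_deriv2 hg' n t) (by fun_prop) 0 Real.pi Real.pi_pos.le
    (c * t) (by positivity) (fun x hx => by have := hb x hx; nlinarith)
  refine h.trans (le_of_eq ?_)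
  rw [Real.sqrt_mul hcp.le, Real.rpow_neg ht.le, ← Real.sqrt_eq_rpow]
  field_simp

lemma HB_three (g g' g'' : ℝ → ℝ) (hg : ∀ x, HasDerivAt g (g' x) x) (hg' : ∀ x, HasDerivAt g' (g'' x) x)
    (hc : Continuous g'') (c a x0 : ℝ) (hcp : 0 < c) (ha : 0 < a) (hx0 : a ≤ x0) (hx1 : x0 ≤ Real.pi / 2)
    (hb1 : ∀ x ∈ Set.Icc 0 x0, c * (Real.cos x - Real.cos x0) ≤ g'' x)
    (hb2 : ∀ x ∈ Set.Icc x0 Real.pi, g'' x ≤ - (c * (Real.cos x0 - Real.cos x))) :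
    HB g (1/3) (16 / √(c * (2 * a / Real.pi ^ 2)) + 2) := by
  intro n t ht
  have hpi := Real.pi_pos
  set K := c * (2 * a / Real.pi ^ 2) with hK
  have hKp : 0 < K := by positivity
  set e := t ^ (-(1/3) : ℝ) with he
  have hep : 0 < e := by positivity
  have het : √(e * t) * e = 1 := by
    have : e * t = (t ^ (1/3 : ℝ)) ^ 2 := by
      rw [he, ← Real.rpow_natCast, ← Real.rpow_mul ht.le, ← Real.rpow_add_one ht.ne']
      norm_num
    rw [this, Real.sqrt_sq (by positivity), he, ← Real.rpow_add ht]
    norm_num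
  have hC : ∀ y ∈ Set.Icc (a / 2) (3 * Real.pi / 4), a / Real.pi ≤ Real.sin y := by
    intro y hy
    rcases le_total y (Real.pi / 2) with h | h
    · have := Real.mul_le_sin (by linarith [hy.1]) h
      refine le_trans ?_ this
      have := hy.1
      rw [div_mul_eq_mul_div]
      gcongr; linarith
    · have := Real.mul_le_sin (x := Real.pi - y) (by linarith [hy.2]) (by linarith)
      rw [Real.sin_pi_sub] at this
      refine le_trans ?_ this
      have := hy.2
      rw [div_mul_eq_mul_div]
      gcongr; linarith
  have hlow1 : ∀ x ∈ Set.Icc 0 (x0 - e), K * e ≤ g'' x := by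
    intro x hx
    refine le_trans ?_ (hb1 x ⟨hx.1, by linarith [hx.2]⟩)
    rw [hK, mul_assoc]
    gcongr
    rw [Real.cos_sub_cos]
    have h1 := hC ((x + x0) / 2) ⟨by linarith [hx.1], by linarith [hx.2]⟩
    have h2 := Real.mul_le_sin (x := (x0 - x) / 2) (by linarith [hx.2]) (by linarith [hx.1])
    have h3 : Real.sin ((x - x0) / 2) = - Real.sin ((x0 - x) / 2) := by
      rw [← Real.sin_neg]; congr 1; ring
    rw [h3]
    have h4 : e / Real.pi ≤ Real.sin ((x0 - x) / 2) := by
      refine le_trans ?_ h2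
      rw [div_mul_eq_mul_div]
      gcongr; linarith [hx.2]
    calc 2 * a / Real.pi ^ 2 * e = 2 * ((a / Real.pi) * (e / Real.pi)) := by field_simp
      _ ≤ 2 * (Real.sin ((x + x0) / 2) * Real.sin ((x0 - x) / 2)) := by
          have h5 : 0 ≤ Real.sin ((x + x0) / 2) := le_trans (by positivity) h1
          gcongr
      _ = _ := by ring
  have hlow2 : ∀ x ∈ Set.Icc (x0 + e) Real.pi, g'' x ≤ - (K * e) := by
    intro x hx
    refine le_trans (hb2 x ⟨by linarith [hx.1], hx.2⟩) ?_
    rw [neg_le_neg_iff, hK, mul_assoc]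
    gcongr
    rw [Real.cos_sub_cos]
    have h1 := hC ((x0 + x) / 2) ⟨by linarith [hx.1], by linarith [hx.2]⟩
    have h2 := Real.mul_le_sin (x := (x - x0) / 2) (by linarith [hx.1]) (by linarith [hx.2])
    have h3 : Real.sin ((x0 - x) / 2) = - Real.sin ((x - x0) / 2) := by
      rw [← Real.sin_neg]; congr 1; ring
    rw [h3]
    have h4 : e / Real.pi ≤ Real.sin ((x - x0) / 2) := by
      refine le_trans ?_ h2
      rw [div_mul_eq_mul_div]
      gcongr; linarith [hx.1]
    calc 2 * a / Real.pi ^ 2 * e = 2 * ((a / Real.pi) * (e / Real.pi)) := by field_simp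
      _ ≤ 2 * (Real.sin ((x0 + x) / 2) * Real.sin ((x - x0) / 2)) := by
          have h5 : 0 ≤ Real.sin ((x0 + x) / 2) := le_trans (by positivity) h1
          gcongr
      _ = _ := by ring
  have hval : 8 / √(K * e * t) = 8 / √K * e := by
    rw [mul_assoc, Real.sqrt_mul hKp.le]
    have h1 : 0 < √(e * t) := by positivity
    have h2 : 0 < √K := by positivity
    field_simp
    linarith
  set F : ℝ → ℝ := fun ξ => n * ξ - g ξ * t with hF
  have cg : Continuous g := continuous_iff_continuousAt.2 fun x => (hg x).continuousAt
  have ci : Continuous (osc F) := osc_cont (by fun_prop)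
  set l := max 0 (x0 - e) with hl
  set u := min Real.pi (x0 + e) with hu
  have hl0 : 0 ≤ l := le_max_left _ _
  have hlx : l ≤ x0 := max_le (by linarith) (by linarith)
  have hux : x0 ≤ u := le_min (by linarith) (by linarith)
  have hupi : u ≤ Real.pi := min_le_left _ _
  have hlu : u - l ≤ 2 * e := by
    have h1 : x0 - e ≤ l := le_max_right _ _
    have h2 : u ≤ x0 + e := min_le_right _ _
    linarith
  have I1 : ‖∫ ξ in (0:ℝ)..l, osc F ξ‖ ≤ 8 / √K * e := by
    rcases le_total (x0 - e) 0 with h | h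
    · have : l = 0 := max_eq_left h
      rw [this]; simp; positivity
    · have : l = x0 - e := max_eq_right h
      rw [this, ← hval]
      exact vdc2neg _ _ _ (phase_deriv hg n t) (phase_deriv2 hg' n t) (by fun_prop) 0 (x0 - e) h
        (K * e * t) (by positivity) (fun x hx => by have := hlow1 x hx; nlinarith)
  have I3 : ‖∫ ξ in u..Real.pi, osc F ξ‖ ≤ 8 / √K * e := by
    rcases le_total Real.pi (x0 + e) with h | h
    · have : u = Real.pi := min_eq_left h
      rw [this]; simp; positivity
    · have : u = x0 + e := min_eq_right h
      rw [this, ← hval]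
      exact vdc2 _ _ _ (phase_deriv hg n t) (phase_deriv2 hg' n t) (by fun_prop) (x0 + e) Real.pi h
        (K * e * t) (by positivity) (fun x hx => by have := hlow2 x hx; nlinarith)
  have I2 : ‖∫ ξ in l..u, osc F ξ‖ ≤ 2 * e := (osc_triv F l u (by linarith)).trans hlu
  rw [← intervalIntegral.integral_add_adjacent_intervals (ci.intervalIntegrable 0 u) (ci.intervalIntegrable u Real.pi),
    ← intervalIntegral.integral_add_adjacent_intervals (ci.intervalIntegrable 0 l) (ci.intervalIntegrable l u)]
  calc _ ≤ _ := norm_add_le _ _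
    _ ≤ ‖∫ ξ in (0:ℝ)..l, osc F ξ‖ + ‖∫ ξ in l..u, osc F ξ‖ + ‖∫ ξ in u..Real.pi, osc F ξ‖ := by
      gcongr; exact norm_add_le _ _
    _ ≤ 8 / √K * e + 2 * e + 8 / √K * e := by gcongr
    _ = _ := by ring

lemma HB_limit (G : ℕ → ℝ → ℝ) (g : ℝ → ℝ) (hG : ∀ j, Continuous (G j))
    (hlim : ∀ ξ ∈ Set.Icc 0 Real.pi, Tendsto (fun j => G j ξ) atTop (𝓝 (g ξ))) (lam C : ℝ)
    (h : ∀ j, HB (G j) lam C) : HB g lam C := by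
  intro n t ht
  have hl : Tendsto (fun j => ∫ ξ in (0:ℝ)..Real.pi, osc (fun ξ => n * ξ - G j ξ * t) ξ) atTop
      (𝓝 (∫ ξ in (0:ℝ)..Real.pi, osc (fun ξ => n * ξ - g ξ * t) ξ)) := by
    apply intervalIntegral.tendsto_integral_filter_of_dominated_convergence (fun _ => 1)
    · refine Filter.Eventually.of_forall fun j => ?_
      exact (osc_cont (by have := hG j; fun_prop)).aestronglyMeasurable
    · refine Filter.Eventually.of_forall fun j => Filter.Eventually.of_forall fun x _ => ?_
      exact (norm_osc _ _).le
    · simp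
    · refine Filter.Eventually.of_forall fun x hx => ?_
      rw [Set.uIoc_of_le Real.pi_pos.le] at hx
      have := hlim x ⟨hx.1.le, hx.2⟩
      unfold osc
      have h2 : Tendsto (fun j => n * x - G j x * t) atTop (𝓝 (n * x - g x * t)) :=
        tendsto_const_nhds.sub (this.mul_const t)
      exact (Complex.continuous_exp.tendsto _).comp
        (((Complex.continuous_ofReal.tendsto _).comp h2).const_mul Complex.I)
  exact le_of_tendsto hl.norm (Filter.Eventually.of_forall fun j => h j n t ht)

lemma sigma1_term_bound (α ξ : ℝ) (k : ℕ) :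
    ‖Real.sin (((k : ℝ) + 1) * ξ / 2) ^ 2 / ((k : ℝ) + 1) ^ (1 + α)‖ ≤ 1 / ((k : ℝ) + 1) ^ (1 + α) := by
  rw [Real.norm_eq_abs, abs_of_nonneg (by positivity)]
  gcongr
  exact Real.sin_sq_le_one _

lemma summable_shift (s : ℝ) (hs : 1 < s) : Summable (fun k : ℕ => 1 / ((k : ℝ) + 1) ^ s) := by
  have := (summable_nat_add_iff 1).2 (Real.summable_one_div_nat_rpow.2 hs)
  simpa using this

lemma sigma1_cont (α : ℝ) (hα : 0 < α) : Continuous (sigma1 α) := by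
  unfold sigma1
  apply continuous_tsum (u := fun k : ℕ => 1 / ((k : ℝ) + 1) ^ (1 + α))
  · intro k
    have : ((k : ℝ) + 1) ^ (1 + α) ≠ 0 := by positivity
    fun_prop (disch := assumption)
  · exact summable_shift _ (by linarith)
  · intro k ξ
    exact sigma1_term_bound α ξ k

lemma sigma1_even (α ξ : ℝ) : sigma1 α (-ξ) = sigma1 α ξ := by
  unfold sigma1
  congr 1; ext k
  rw [mul_neg, neg_div, Real.sin_neg, neg_sq]

lemma Kker_bound (α lam C : ℝ) (hα : 0 < α) (h : HB (sigma1 α) lam C) (t : ℝ) (ht : t ≠ 0) (n : ℤ) :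
    ‖Kker α t n‖ ≤ C * |t| ^ (-lam) := by
  have hpi := Real.pi_pos
  have cs := sigma1_cont α hα
  have h' : ∀ n : ℝ, ‖∫ ξ in (0:ℝ)..Real.pi, osc (fun ξ => n * ξ - sigma1 α ξ * t) ξ‖ ≤ C * |t| ^ (-lam) := by
    intro n
    rcases lt_or_gt_of_ne ht with h1 | h1
    · have := h (-n) (-t) (by linarith)
      rw [abs_of_neg h1, ← osc_neg_norm]
      convert this using 6
      ring
    · rw [abs_of_pos h1]; exact h n t h1
  have ci : ∀ n : ℝ, Continuous (osc (fun ξ => n * ξ - sigma1 α ξ * t)) := fun n => osc_cont (by fun_prop)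
  have e0 : Kker α t n = (2 * Real.pi)⁻¹ • ∫ ξ in (-Real.pi)..Real.pi, osc (fun ξ => (n:ℝ) * ξ - sigma1 α ξ * t) ξ := rfl
  rw [e0, ← intervalIntegral.integral_add_adjacent_intervals ((ci n).intervalIntegrable _ 0) ((ci n).intervalIntegrable 0 _)]
  have e1 : ∫ ξ in (-Real.pi)..0, osc (fun ξ => (n:ℝ) * ξ - sigma1 α ξ * t) ξ
      = ∫ ξ in (0:ℝ)..Real.pi, osc (fun ξ => (-n:ℝ) * ξ - sigma1 α ξ * t) ξ := by
    have := intervalIntegral.integral_comp_neg (osc (fun ξ => (n:ℝ) * ξ - sigma1 α ξ * t)) (a := 0) (b := Real.pi)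
    rw [neg_zero] at this
    rw [← this]
    congr 1; ext ξ
    simp only [osc]
    rw [sigma1_even]
    simp
  rw [e1, norm_smul]
  have h1 := h' n
  have h2 := h' (-n)
  have hp0 : ‖(2 * Real.pi)⁻¹‖ * 2 ≤ 1 := by
    rw [Real.norm_eq_abs, abs_of_pos (by positivity)]
    have : (1:ℝ) ≤ Real.pi := by linarith [Real.pi_gt_three]
    rw [mul_inv]
    have := inv_le_one_of_one_le₀ this
    linarith
  have hB : 0 ≤ C * |t| ^ (-lam) := (norm_nonneg _).trans h1
  calc _ ≤ ‖(2 * Real.pi)⁻¹‖ * (C * |t| ^ (-lam) + C * |t| ^ (-lam)) := by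
        gcongr
        exact (norm_add_le _ _).trans (add_le_add h2 h1)
    _ = (‖(2 * Real.pi)⁻¹‖ * 2) * (C * |t| ^ (-lam)) := by ring
    _ ≤ 1 * (C * |t| ^ (-lam)) := by gcongr
    _ = _ := one_mul _
/-- closed form of `Σ_{k ≥ 1} cos(kξ) e^{-kx}` -/
def Pk (x ξ : ℝ) : ℝ := (Real.cos ξ - Real.exp (-x)) / (2 * (Real.cosh x - Real.cos ξ))

lemma cosh_gt (x ξ : ℝ) (hx : 0 < x) : 0 < Real.cosh x - Real.cos ξ := by
  have h1 : 1 < Real.cosh x := Real.one_lt_cosh.2 hx.ne'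
  have h2 := Real.cos_le_one ξ
  linarith

lemma Pk_hasSum (x ξ : ℝ) (hx : 0 < x) :
    HasSum (fun k : ℕ => Real.cos (((k : ℝ) + 1) * ξ) * Real.exp (-(((k : ℝ) + 1) * x))) (Pk x ξ) := by
  set z : ℂ := Complex.exp (-x + ξ * Complex.I) with hz
  have hzn : ‖z‖ < 1 := by
    rw [hz, Complex.norm_exp]; simp; exact hx
  have h1 := (hasSum_geometric_of_norm_lt_one hzn).mul_left z
  have h2 := (Complex.hasSum_iff _ _).1 h1 |>.1
  convert h2 using 1
  · ext k
    have : z * z ^ k = Complex.exp ((((-(((k:ℝ) + 1) * x)) : ℝ) : ℂ) + (((((k:ℝ) + 1) * ξ) : ℝ) : ℂ) * Complex.I) := by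
      rw [← pow_succ', hz, ← Complex.exp_nat_mul]
      congr 1; push_cast; ring
    rw [this, Complex.exp_re]
    simp [mul_comm]
  · have hre : z.re = Real.exp (-x) * Real.cos ξ := by rw [hz, Complex.exp_re]; simp
    have him : z.im = Real.exp (-x) * Real.sin ξ := by rw [hz, Complex.exp_im]; simp
    rw [Complex.mul_re, Complex.inv_re, Complex.inv_im, Complex.normSq_apply]
    simp only [Complex.sub_re, Complex.sub_im, Complex.one_re, Complex.one_im, hre, him]
    have hc := cosh_gt x ξ hx
    unfold Pk
    rw [Real.cosh_eq] at *
    have he : Real.exp x * Real.exp (-x) = 1 := by rw [← Real.exp_add]; simp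
    have hs := Real.sin_sq_add_cos_sq ξ
    set e := Real.exp (-x)
    set E := Real.exp x
    set c := Real.cos ξ
    set s := Real.sin ξ
    have hep : 0 < e := Real.exp_pos _
    have hden : (1 - e * c) * (1 - e * c) + (0 - e * s) * (0 - e * s) = 2 * e * ((E + e) / 2 - c) := by
      linear_combination (e ^ 2) * hs - he
    have hd : (E + e) / 2 - c ≠ 0 := hc.ne'
    rw [hden]
    have key : 2 * e * ((E + e) / 2 - c) ≠ 0 := mul_ne_zero (mul_ne_zero two_ne_zero hep.ne') hd
    have key2 : 2 * ((E + e) / 2 - c) ≠ 0 := mul_ne_zero two_ne_zero hd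
    rw [mul_div_assoc', mul_div_assoc', ← sub_div, div_eq_div_iff key2 key]
    linear_combination (2 * e ^ 2 * ((E + e) / 2 - c)) * hs

/-- truncated coefficients -/
def acoef (β δ : ℝ) (k : ℕ) : ℝ := ∫ x in Set.Ioi δ, x ^ β * Real.exp (-(((k : ℝ) + 1) * x))

lemma base_int (β δ : ℝ) (hδ : 0 < δ) : IntegrableOn (fun x : ℝ => x ^ β * Real.exp (-x)) (Set.Ioi δ) := by
  apply integrable_of_isBigO_exp_neg (b := 1/2) (by norm_num)
  · apply ContinuousOn.mul
    · apply ContinuousOn.rpow_const continuousOn_id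
      intro x hx
      left
      exact (lt_of_lt_of_le hδ hx).ne'
    · fun_prop
  · have := (Real.Gamma_integrand_isLittleO β).isBigO
    refine this.congr_left ?_
    intro x; ring

lemma acoef_int (β δ : ℝ) (hδ : 0 < δ) (k : ℕ) :
    IntegrableOn (fun x : ℝ => x ^ β * Real.exp (-(((k : ℝ) + 1) * x))) (Set.Ioi δ) := by
  refine (base_int β δ hδ).mono' ?_ ?_
  · apply Measurable.aestronglyMeasurable; fun_prop
  · filter_upwards [ae_restrict_mem measurableSet_Ioi] with x hx
    have hx0 : 0 < x := hδ.trans hx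
    rw [Real.norm_eq_abs, abs_of_nonneg (by positivity)]
    gcongr
    have : (0:ℝ) ≤ k := by positivity
    nlinarith

lemma acoef_nonneg (β δ : ℝ) (hδ : 0 < δ) (k : ℕ) : 0 ≤ acoef β δ k := by
  apply setIntegral_nonneg measurableSet_Ioi
  intro x hx
  have hx0 : 0 < x := hδ.trans hx
  positivity

lemma acoef_sum (β δ : ℝ) (hδ : 0 < δ) : Summable (acoef β δ) := by
  have hg : Summable (fun k : ℕ => Real.exp (-δ) ^ k * acoef β δ 0) := by
    apply Summable.mul_right
    apply summable_geometric_of_lt_one (Real.exp_pos _).le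
    rw [Real.exp_lt_one_iff]; linarith
  refine Summable.of_nonneg_of_le (acoef_nonneg β δ hδ) (fun k => ?_) hg
  unfold acoef
  rw [← integral_const_mul]
  apply setIntegral_mono_on (acoef_int β δ hδ k) ((acoef_int β δ hδ 0).const_mul _) measurableSet_Ioi
  intro x hx
  have hx0 : 0 < x := hδ.trans hx
  rw [mul_left_comm]
  gcongr
  rw [← Real.exp_nat_mul, ← Real.exp_add]
  apply Real.exp_le_exp.2
  have hk : (0:ℝ) ≤ k := by positivity
  have : (k:ℝ) * δ ≤ k * x := by gcongr; exact le_of_lt hx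
  push_cast
  nlinarith

def Wf (β δ ξ : ℝ) : ℝ := ∑' k : ℕ, (1 - Real.cos (((k : ℝ) + 1) * ξ)) * (acoef β δ k / ((k : ℝ) + 1) ^ 2)
def W1 (β δ ξ : ℝ) : ℝ := ∑' k : ℕ, Real.sin (((k : ℝ) + 1) * ξ) * (acoef β δ k / ((k : ℝ) + 1))
def W2 (β δ ξ : ℝ) : ℝ := ∑' k : ℕ, Real.cos (((k : ℝ) + 1) * ξ) * acoef β δ k

lemma Wf_deriv (β δ : ℝ) (hδ : 0 < δ) (ξ : ℝ) : HasDerivAt (Wf β δ) (W1 β δ ξ) ξ := by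
  unfold Wf W1
  refine hasDerivAt_tsum (acoef_sum β δ hδ) (y₀ := 0)
    (g := fun (k : ℕ) ξ => (1 - Real.cos (((k : ℝ) + 1) * ξ)) * (acoef β δ k / ((k : ℝ) + 1) ^ 2))
    (g' := fun (k : ℕ) ξ => Real.sin (((k : ℝ) + 1) * ξ) * (acoef β δ k / ((k : ℝ) + 1))) ?_ ?_ ?_ ξ
  · intro k y
    have h1 : HasDerivAt (fun ξ : ℝ => ((k : ℝ) + 1) * ξ) ((k:ℝ) + 1) y := by
      simpa using (hasDerivAt_id' y).const_mul ((k : ℝ) + 1)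
    have h2 := ((hasDerivAt_const y (1:ℝ)).sub h1.cos).mul_const (acoef β δ k / ((k : ℝ) + 1) ^ 2)
    refine h2.congr_deriv ?_
    have : (k:ℝ) + 1 ≠ 0 := by positivity
    field_simp; ring
  · intro k y
    have h0 := acoef_nonneg β δ hδ k
    rw [norm_mul, Real.norm_eq_abs, Real.norm_eq_abs, abs_of_nonneg (a := acoef β δ k / ((k : ℝ) + 1)) (by positivity)]
    calc _ ≤ 1 * (acoef β δ k / ((k : ℝ) + 1)) := by gcongr; exact Real.abs_sin_le_one _
      _ ≤ 1 * (acoef β δ k / 1) := by gcongr; have : (0:ℝ) ≤ k := by positivity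
                                      linarith
      _ = _ := by simp
  · simp [summable_zero]

lemma W1_deriv (β δ : ℝ) (hδ : 0 < δ) (ξ : ℝ) : HasDerivAt (W1 β δ) (W2 β δ ξ) ξ := by
  unfold W1 W2
  refine hasDerivAt_tsum (acoef_sum β δ hδ) (y₀ := 0)
    (g := fun (k : ℕ) ξ => Real.sin (((k : ℝ) + 1) * ξ) * (acoef β δ k / ((k : ℝ) + 1)))
    (g' := fun (k : ℕ) ξ => Real.cos (((k : ℝ) + 1) * ξ) * acoef β δ k) ?_ ?_ ?_ ξ
  · intro k y
    have h1 : HasDerivAt (fun ξ : ℝ => ((k : ℝ) + 1) * ξ) ((k:ℝ) + 1) y := by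
      simpa using (hasDerivAt_id' y).const_mul ((k : ℝ) + 1)
    have h2 := h1.sin.mul_const (acoef β δ k / ((k : ℝ) + 1))
    refine h2.congr_deriv ?_
    have : (k:ℝ) + 1 ≠ 0 := by positivity
    field_simp
  · intro k y
    have h0 := acoef_nonneg β δ hδ k
    rw [norm_mul, Real.norm_eq_abs, Real.norm_eq_abs, abs_of_nonneg h0]
    calc _ ≤ 1 * acoef β δ k := by gcongr; exact Real.abs_cos_le_one _
      _ = _ := by simp
  · simp [summable_zero]

lemma W2_cont (β δ : ℝ) (hδ : 0 < δ) : Continuous (W2 β δ) := by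
  unfold W2
  apply continuous_tsum (u := acoef β δ)
  · intro k; fun_prop
  · exact acoef_sum β δ hδ
  · intro k y
    have h0 := acoef_nonneg β δ hδ k
    rw [norm_mul, Real.norm_eq_abs, Real.norm_eq_abs, abs_of_nonneg h0]
    calc _ ≤ 1 * acoef β δ k := by gcongr; exact Real.abs_cos_le_one _
      _ = _ := by simp

lemma W2_eq (β δ : ℝ) (hδ : 0 < δ) (ξ : ℝ) : W2 β δ ξ = ∫ x in Set.Ioi δ, x ^ β * Pk x ξ := by
  have hI : ∀ k : ℕ, Integrable (fun x : ℝ => Real.cos (((k : ℝ) + 1) * ξ) * (x ^ β * Real.exp (-(((k : ℝ) + 1) * x))))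
      (volume.restrict (Set.Ioi δ)) := fun k => (acoef_int β δ hδ k).const_mul _
  have h := hasSum_integral_of_summable_integral_norm hI ?_
  · have h2 := h.tsum_eq
    unfold W2 acoef
    simp_rw [← integral_const_mul]
    rw [h2]
    apply setIntegral_congr_fun measurableSet_Ioi
    intro x hx
    have hx0 : 0 < x := hδ.trans hx
    simp only
    rw [← (Pk_hasSum x ξ hx0).tsum_eq, ← tsum_mul_left]
    congr 1; ext k; ring
  · refine Summable.of_nonneg_of_le (fun k => by positivity) (fun k => ?_) (acoef_sum β δ hδ)
    unfold acoef
    apply setIntegral_mono_on (hI k).norm (acoef_int β δ hδ k) measurableSet_Ioi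
    intro x hx
    have hx0 : 0 < x := hδ.trans hx
    rw [norm_mul, Real.norm_eq_abs, Real.norm_eq_abs, abs_of_nonneg (a := x ^ β * _) (by positivity)]
    calc _ ≤ 1 * (x ^ β * Real.exp (-(((k : ℝ) + 1) * x))) := by gcongr; exact Real.abs_cos_le_one _
      _ = _ := by simp

lemma Pk_meas (ξ : ℝ) : Measurable (fun x => Pk x ξ) := by
  unfold Pk
  have : Measurable Real.cosh := Real.continuous_cosh.measurable
  fun_prop

lemma Pk_int (β δ : ℝ) (hδ : 0 < δ) (ξ : ℝ) : IntegrableOn (fun x : ℝ => x ^ β * Pk x ξ) (Set.Ioi δ) := by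
  refine ((base_int β δ hδ).mul_const (1 - Real.exp (-δ))⁻¹).mono' ?_ ?_
  · have := Pk_meas ξ
    apply Measurable.aestronglyMeasurable; fun_prop
  · filter_upwards [ae_restrict_mem measurableSet_Ioi] with x hx
    have hx0 : 0 < x := hδ.trans hx
    rw [norm_mul, Real.norm_eq_abs, abs_of_nonneg (by positivity), mul_assoc]
    gcongr
    have hd : Real.exp (-δ) < 1 := by rw [Real.exp_lt_one_iff]; linarith
    have hx1 : Real.exp (-x) < 1 := by rw [Real.exp_lt_one_iff]; linarith
    have hxd : Real.exp (-x) ≤ Real.exp (-δ) := Real.exp_le_exp.2 (by linarith [Set.mem_Ioi.1 hx])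
    have hgs : HasSum (fun k : ℕ => Real.exp (-(((k : ℝ) + 1) * x))) (Real.exp (-x) * (1 - Real.exp (-x))⁻¹) := by
      have := (hasSum_geometric_of_lt_one (Real.exp_pos (-x)).le hx1).mul_left (Real.exp (-x))
      refine this.congr_fun ?_
      intro k
      rw [← pow_succ', ← Real.exp_nat_mul]; congr 1; push_cast; ring
    have h1 : ‖Pk x ξ‖ ≤ Real.exp (-x) * (1 - Real.exp (-x))⁻¹ := by
      rw [← (Pk_hasSum x ξ hx0).tsum_eq]
      apply tsum_of_norm_bounded hgs
      intro k
      rw [norm_mul, Real.norm_eq_abs, Real.norm_eq_abs, abs_of_nonneg (a := Real.exp _) (by positivity)]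
      calc _ ≤ 1 * Real.exp (-(((k : ℝ) + 1) * x)) := by gcongr; exact Real.abs_cos_le_one _
        _ = _ := by simp
    refine h1.trans ?_
    gcongr
lemma delta_lim (g : ℝ → ℝ) (hg : IntegrableOn g (Set.Ioi 0)) :
    Tendsto (fun j : ℕ => ∫ x in Set.Ioi (1 / ((j : ℝ) + 1)), g x) atTop (𝓝 (∫ x in Set.Ioi 0, g x)) := by
  have hU : (⋃ j : ℕ, Set.Ioi (1 / ((j : ℝ) + 1))) = Set.Ioi 0 := by
    ext x
    simp only [Set.mem_iUnion, Set.mem_Ioi]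
    constructor
    · rintro ⟨j, hj⟩
      exact lt_trans (by positivity) hj
    · intro hx
      exact exists_nat_one_div_lt hx
  rw [← hU]
  apply tendsto_setIntegral_of_monotone
  · intro j; exact measurableSet_Ioi
  · intro i j hij
    apply Set.Ioi_subset_Ioi
    have : (i:ℝ) ≤ j := by exact_mod_cast hij
    gcongr
  · rw [hU]; exact hg

lemma half_add_Pk (x ξ : ℝ) (hx : 0 < x) : 1 / 2 + Pk x ξ = Real.sinh x / (2 * (Real.cosh x - Real.cos ξ)) := by
  have h := (cosh_gt x ξ hx).ne'
  unfold Pk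
  rw [← Real.cosh_sub_sinh x]
  field_simp
  ring

/-- lower bound weight -/
def c1 (β : ℝ) : ℝ := ∫ x in (1:ℝ)..2, x ^ β * (Real.sinh x / (2 * (Real.cosh x + 1) ^ 2))

lemma rpow_cont12 (β : ℝ) : ContinuousOn (fun x : ℝ => x ^ β) (Set.Icc 1 2) := by
  apply ContinuousOn.rpow_const continuousOn_id
  intro x hx
  left
  exact (lt_of_lt_of_le one_pos hx.1).ne'

lemma c1_cont (β : ℝ) : ContinuousOn (fun x : ℝ => x ^ β * (Real.sinh x / (2 * (Real.cosh x + 1) ^ 2))) (Set.Icc 1 2) := by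
  apply (rpow_cont12 β).mul
  apply Continuous.continuousOn
  apply Continuous.div (by fun_prop) (by fun_prop)
  intro x
  have := Real.cosh_pos x
  positivity

lemma c1_pos (β : ℝ) : 0 < c1 β := by
  apply intervalIntegral.intervalIntegral_pos_of_pos_on
  · apply ContinuousOn.intervalIntegrable
    rw [Set.uIcc_of_le one_le_two]
    exact c1_cont β
  · intro x hx
    have hx0 : 0 < x := lt_trans one_pos hx.1
    have h1 := Real.sinh_pos_iff.2 hx0
    have := Real.cosh_pos x
    positivity
  · norm_num

/-- generic lower bound for integrals over `Ioi δ` by the piece on `(1,2]` -/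
lemma piece_lower (δ : ℝ) (hδ1 : δ ≤ 1) (F h : ℝ → ℝ) (hF : IntegrableOn F (Set.Ioi δ))
    (hF0 : ∀ x, δ < x → 0 ≤ F x) (hh : ContinuousOn h (Set.Icc 1 2)) (hle : ∀ x ∈ Set.Ioc (1:ℝ) 2, h x ≤ F x) :
    ∫ x in (1:ℝ)..2, h x ≤ ∫ x in Set.Ioi δ, F x := by
  have hsub : Set.Ioc (1:ℝ) 2 ⊆ Set.Ioi δ := fun x hx => lt_of_le_of_lt hδ1 hx.1
  rw [intervalIntegral.integral_of_le one_le_two]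
  calc ∫ x in Set.Ioc (1:ℝ) 2, h x ≤ ∫ x in Set.Ioc (1:ℝ) 2, F x := by
        apply setIntegral_mono_on _ (hF.mono_set hsub) measurableSet_Ioc hle
        exact (hh.integrableOn_Icc).mono_set Set.Ioc_subset_Icc_self
    _ ≤ _ := by
        apply setIntegral_mono_set hF
        · filter_upwards [ae_restrict_mem measurableSet_Ioi] with x hx using hF0 x hx
        · exact hsub.eventuallyLE

lemma Pk_diff (x ξ η : ℝ) (hx : 0 < x) : Pk x ξ - Pk x η =
    Real.sinh x * (Real.cos ξ - Real.cos η) / (2 * ((Real.cosh x - Real.cos ξ) * (Real.cosh x - Real.cos η))) := by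
  have h1 := half_add_Pk x ξ hx
  have h2 := half_add_Pk x η hx
  have h3 := (cosh_gt x ξ hx).ne'
  have h4 := (cosh_gt x η hx).ne'
  have : Pk x ξ - Pk x η = (1/2 + Pk x ξ) - (1/2 + Pk x η) := by ring
  rw [this, h1, h2]
  field_simp
  ring

lemma W2_diff (β δ : ℝ) (hδ : 0 < δ) (hδ1 : δ ≤ 1) (ξ η : ℝ) (h : Real.cos η ≤ Real.cos ξ) :
    c1 β * (Real.cos ξ - Real.cos η) ≤ W2 β δ ξ - W2 β δ η := by
  rw [W2_eq β δ hδ, W2_eq β δ hδ, ← integral_sub (Pk_int β δ hδ ξ) (Pk_int β δ hδ η), c1,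
    ← intervalIntegral.integral_mul_const]
  have hd : 0 ≤ Real.cos ξ - Real.cos η := by linarith
  apply piece_lower δ hδ1 (fun x => x ^ β * Pk x ξ - x ^ β * Pk x η) _ ((Pk_int β δ hδ ξ).sub (Pk_int β δ hδ η))
  · intro x hx
    beta_reduce
    have hx0 : 0 < x := hδ.trans hx
    rw [← mul_sub, Pk_diff x ξ η hx0]
    have h1 := Real.sinh_pos_iff.2 hx0
    have h3 := (cosh_gt x ξ hx0)
    have h4 := (cosh_gt x η hx0)
    positivity
  · exact (c1_cont β).mul continuousOn_const
  · intro x hx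
    have hx0 : 0 < x := lt_trans one_pos hx.1
    beta_reduce
    rw [← mul_sub, Pk_diff x ξ η hx0, mul_assoc]
    have h1 := Real.sinh_pos_iff.2 hx0
    have h3 := (cosh_gt x ξ hx0)
    have h4 := (cosh_gt x η hx0)
    gcongr
    rw [div_mul_eq_mul_div]
    gcongr
    rw [sq]
    have := Real.cosh_pos x
    have h5 := Real.neg_one_le_cos ξ
    have h6 := Real.neg_one_le_cos η
    gcongr <;> linarith

lemma W2_right (β δ : ℝ) (hδ : 0 < δ) : W2 β δ (Real.pi / 2) ≤ 0 := by
  rw [W2_eq β δ hδ]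
  apply setIntegral_nonpos measurableSet_Ioi
  intro x hx
  have hx0 : 0 < x := hδ.trans hx
  unfold Pk
  rw [Real.cos_pi_div_two]
  have h1 := Real.cosh_pos x
  have h2 := Real.exp_pos (-x)
  apply mul_nonpos_of_nonneg_of_nonpos (by positivity)
  apply div_nonpos_of_nonpos_of_nonneg <;> linarith

lemma W2_left (β : ℝ) (hβ : -1 < β) : ∃ a : ℝ, 0 < a ∧ a ≤ Real.pi / 2 ∧
    ∀ δ : ℝ, 0 < δ → δ ≤ 1 → 0 ≤ W2 β δ a := by
  set m : ℝ := (1/10) / (2 * (Real.cosh 2)) with hm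
  have hmp : 0 < m := by have := Real.cosh_pos 2; positivity
  set J : ℝ := ∫ x in (1:ℝ)..2, x ^ β * m with hJ
  have hJp : 0 < J := by
    apply intervalIntegral.intervalIntegral_pos_of_pos_on
    · apply ContinuousOn.intervalIntegrable
      rw [Set.uIcc_of_le one_le_two]
      exact (rpow_cont12 β).mul continuousOn_const
    · intro x hx
      have hx0 : 0 < x := lt_trans one_pos hx.1
      positivity
    · norm_num
  set s := β + 1 with hs
  have hsp : 0 < s := by linarith
  set τ : ℝ := min 1 ((2 * s * J) ^ (1 / s)) with hτ
  have hτp : 0 < τ := by apply lt_min one_pos; positivity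
  have hτ1 : τ ≤ 1 := min_le_left _ _
  have hτs : τ ^ s ≤ 2 * s * J := by
    calc τ ^ s ≤ ((2 * s * J) ^ (1 / s)) ^ s := by gcongr; exact min_le_right _ _
      _ = _ := by rw [← Real.rpow_mul (by positivity)]; field_simp; simp
  set y := max (Real.exp (-τ)) (1/2) with hy
  have hy1 : y < 1 := max_lt (by rw [Real.exp_lt_one_iff]; linarith) (by norm_num)
  have hy2 : 1/2 ≤ y := le_max_right _ _
  have hy3 : Real.exp (-τ) ≤ y := le_max_left _ _
  have hcos : Real.cos (Real.arccos y) = y := Real.cos_arccos (by linarith) hy1.le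
  refine ⟨Real.arccos y, Real.arccos_pos.2 hy1, Real.arccos_le_pi_div_two.2 (by linarith), ?_⟩
  intro δ hδ hδ1
  rw [W2_eq β δ hδ]
  have hrint : IntegrableOn (fun x : ℝ => x ^ β) (Set.Ioc 0 τ) :=
    (intervalIntegrable_iff_integrableOn_Ioc_of_le hτp.le).1 (intervalIntegral.intervalIntegrable_rpow' hβ)
  set B : ℝ → ℝ := (Set.Ioc 0 τ).indicator (fun x => x ^ β * (1/2)) with hB
  have hBint : Integrable B := (integrable_indicator_iff measurableSet_Ioc).2 (hrint.mul_const _)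
  have hB0 : ∀ x, 0 ≤ B x := by
    intro x
    apply Set.indicator_nonneg
    intro x hx
    have := hx.1
    positivity
  have hBval : ∫ x in Set.Ioi δ, B x ≤ J := by
    calc ∫ x in Set.Ioi δ, B x ≤ ∫ x, B x := setIntegral_le_integral hBint (Filter.Eventually.of_forall hB0)
      _ = τ ^ s / s * (1/2) := by
        rw [hB, integral_indicator measurableSet_Ioc, integral_mul_const, ← intervalIntegral.integral_of_le hτp.le,
          integral_rpow (Or.inl hβ), ← hs, Real.zero_rpow hsp.ne', sub_zero]
      _ ≤ (2 * s * J) / s * (1/2) := by gcongr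
      _ = J := by field_simp
  have hmain : J ≤ ∫ x in Set.Ioi δ, (x ^ β * Pk x (Real.arccos y) + B x) := by
    apply piece_lower δ hδ1 (fun x => x ^ β * Pk x (Real.arccos y) + B x) _ ((Pk_int β δ hδ _).add hBint.integrableOn)
    · intro x hx
      beta_reduce
      have hx0 : 0 < x := hδ.trans hx
      have hc := cosh_gt x (Real.arccos y) hx0
      by_cases h : x ≤ τ
      · have : B x = x ^ β * (1/2) := by rw [hB]; simp [Set.indicator, hx0, h]
        rw [this, ← mul_add, add_comm (Pk _ _), half_add_Pk _ _ hx0]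
        have h1 := Real.sinh_pos_iff.2 hx0
        positivity
      · have h1 : 0 ≤ Pk x (Real.arccos y) := by
          unfold Pk
          apply div_nonneg _ (by linarith)
          rw [hcos]
          have : Real.exp (-x) ≤ Real.exp (-τ) := Real.exp_le_exp.2 (by linarith)
          linarith
        have := hB0 x
        positivity
    · exact (rpow_cont12 β).mul continuousOn_const
    · intro x hx
      have hx0 : 0 < x := lt_trans one_pos hx.1
      beta_reduce
      have hc := cosh_gt x (Real.arccos y) hx0
      have h1 : m ≤ Pk x (Real.arccos y) := by
        unfold Pk
        rw [hm]
        rw [hcos] at *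
        have h2 : Real.exp (-x) ≤ 0.4 := by
          have h3 : Real.exp (-x) ≤ Real.exp (-1) := Real.exp_le_exp.2 (by linarith [hx.1])
          have := Real.exp_neg_one_lt_d9
          linarith
        have h3 : Real.cosh x ≤ Real.cosh 2 := Real.cosh_le_cosh.2 (by rw [abs_of_pos hx0, abs_of_pos two_pos]; exact hx.2)
        apply div_le_div₀ <;> linarith
      have := hB0 x
      have h2 : x ^ β * m ≤ x ^ β * Pk x (Real.arccos y) := by gcongr
      linarith
  rw [integral_add (Pk_int β δ hδ _) hBint.integrableOn] at hmain
  linarith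

lemma sin_half (k : ℕ) (ξ : ℝ) : Real.sin (((k : ℝ) + 1) * ξ / 2) ^ 2 = (1 - Real.cos (((k : ℝ) + 1) * ξ)) / 2 := by
  rw [Real.sin_sq_eq_half_sub]
  rw [show 2 * (((k : ℝ) + 1) * ξ / 2) = ((k : ℝ) + 1) * ξ by ring]; ring

lemma HB_gt_one (α : ℝ) (hα : 1 < α) : ∃ C, HB (sigma1 α) (1/3) C := by
  obtain ⟨a, ha0, ha1, ha⟩ := W2_left (α - 2) (by linarith)
  set s := α - 1 with hs
  have hsp : 0 < s := by linarith
  have hG := Real.Gamma_pos_of_pos hsp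
  set c := 1 / (2 * Real.Gamma s) with hc
  have hcp : 0 < c := by positivity
  have hδ : ∀ j : ℕ, (0:ℝ) < 1 / ((j:ℝ) + 1) := fun j => by positivity
  have hδ1 : ∀ j : ℕ, 1 / ((j:ℝ) + 1) ≤ 1 := fun j => by
    rw [div_le_one (by positivity)]; have : (0:ℝ) ≤ j := by positivity
    linarith
  have hc1 := c1_pos (α - 2)
  have hpi := Real.pi_pos
  refine ⟨16 / √(c * c1 (α - 2) * (2 * a / Real.pi ^ 2)) + 2,
    HB_limit (fun j ξ => c * Wf (α - 2) (1 / ((j:ℝ) + 1)) ξ) _ ?_ ?_ _ _ ?_⟩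
  · intro j
    have : Continuous (Wf (α - 2) (1 / ((j:ℝ) + 1))) :=
      continuous_iff_continuousAt.2 fun x => (Wf_deriv _ _ (hδ j) x).continuousAt
    fun_prop
  · intro ξ hξ
    have hcoef : ∀ k : ℕ, ∫ x in Set.Ioi 0, x ^ (α - 2) * Real.exp (-(((k : ℝ) + 1) * x))
        = (1 / ((k:ℝ) + 1)) ^ s * Real.Gamma s := by
      intro k
      rw [← Real.integral_rpow_mul_exp_neg_mul_Ioi hsp (by positivity)]
      rw [show α - 2 = s - 1 by rw [hs]; ring]
    have hint0 : ∀ k : ℕ, IntegrableOn (fun x : ℝ => x ^ (α - 2) * Real.exp (-(((k : ℝ) + 1) * x))) (Set.Ioi 0) := by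
      intro k
      apply not_imp_comm.1 integral_undef
      rw [hcoef]
      positivity
    have hlim : ∀ k : ℕ, Tendsto (fun j : ℕ => acoef (α - 2) (1 / ((j:ℝ) + 1)) k) atTop
        (𝓝 ((1 / ((k:ℝ) + 1)) ^ s * Real.Gamma s)) := by
      intro k
      rw [← hcoef]
      exact delta_lim _ (hint0 k)
    have hbd : ∀ (j k : ℕ), acoef (α - 2) (1 / ((j:ℝ) + 1)) k ≤ (1 / ((k:ℝ) + 1)) ^ s * Real.Gamma s := by
      intro j k
      rw [← hcoef]
      apply setIntegral_mono_set (hint0 k)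
      · filter_upwards [ae_restrict_mem measurableSet_Ioi] with x hx
        have : (0:ℝ) < x := hx
        simp only [Pi.zero_apply]
        positivity
      · exact (Set.Ioi_subset_Ioi (hδ j).le).eventuallyLE
    have hterm : ∀ k : ℕ, ((1 / ((k:ℝ) + 1)) ^ s * Real.Gamma s) / ((k:ℝ) + 1) ^ 2
        = Real.Gamma s * (1 / ((k:ℝ) + 1) ^ (1 + α)) := by
      intro k
      have hk : (0:ℝ) < (k:ℝ) + 1 := by positivity
      rw [Real.div_rpow zero_le_one hk.le, Real.one_rpow, show 1 + α = s + 2 by rw [hs]; ring,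
        Real.rpow_add hk]
      norm_num
      field_simp
    have hsig : sigma1 α ξ = c * ∑' k : ℕ, (1 - Real.cos (((k : ℝ) + 1) * ξ)) *
        (((1 / ((k:ℝ) + 1)) ^ s * Real.Gamma s) / ((k:ℝ) + 1) ^ 2) := by
      unfold sigma1
      rw [← tsum_mul_left]
      congr 1; ext k
      rw [hterm, sin_half, hc]
      field_simp
    rw [hsig]
    apply Tendsto.const_mul
    unfold Wf
    apply tendsto_tsum_of_dominated_convergence
      (bound := fun k : ℕ => 2 * (Real.Gamma s * (1 / ((k:ℝ) + 1) ^ (1 + α))))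
    · exact ((summable_shift _ (by linarith)).mul_left _).mul_left _
    · intro k
      exact ((hlim k).div_const _).const_mul _
    · refine Filter.Eventually.of_forall fun j k => ?_
      have h1 := Real.cos_le_one (((k : ℝ) + 1) * ξ)
      have h2 := Real.neg_one_le_cos (((k : ℝ) + 1) * ξ)
      have h3 := acoef_nonneg (α - 2) _ (hδ j) k
      have h4 : 0 ≤ 1 - Real.cos (((k : ℝ) + 1) * ξ) := by linarith
      rw [Real.norm_eq_abs, abs_of_nonneg (by positivity), ← hterm]
      gcongr
      · linarith
      · exact hbd j k
  · intro j
    set δ := 1 / ((j:ℝ) + 1) with hδd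
    have hW2c := W2_cont (α - 2) δ (hδ j)
    obtain ⟨x0, hx0, hz⟩ := intermediate_value_Icc' ha1 hW2c.continuousOn
      (show (0:ℝ) ∈ Set.Icc _ _ from ⟨W2_right (α - 2) δ (hδ j), ha δ (hδ j) (hδ1 j)⟩)
    apply HB_three (fun ξ => c * Wf (α - 2) δ ξ) (fun ξ => c * W1 (α - 2) δ ξ) (fun ξ => c * W2 (α - 2) δ ξ)
      (fun x => (Wf_deriv _ _ (hδ j) x).const_mul c) (fun x => (W1_deriv _ _ (hδ j) x).const_mul c)
      (by fun_prop) _ a x0 (by positivity) ha0 hx0.1 hx0.2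
    · intro x hx
      have h1 : Real.cos x0 ≤ Real.cos x :=
        Real.cos_le_cos_of_nonneg_of_le_pi hx.1 (by linarith [hx0.2]) hx.2
      have := W2_diff (α - 2) δ (hδ j) (hδ1 j) x x0 h1
      rw [hz, sub_zero] at this
      rw [mul_assoc]
      gcongr
    · intro x hx
      have h1 : Real.cos x ≤ Real.cos x0 :=
        Real.cos_le_cos_of_nonneg_of_le_pi (by linarith [hx0.1]) hx.2 hx.1
      have := W2_diff (α - 2) δ (hδ j) (hδ1 j) x0 x h1
      rw [hz, zero_sub] at this
      rw [mul_assoc, ← mul_neg]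
      gcongr
      linarith

/-- the quadratic polynomial summing `(1 - cos kξ)/k²` -/
def Qq (ξ : ℝ) : ℝ := Real.pi * ξ / 2 - ξ ^ 2 / 4

lemma Qq_hasSum (ξ : ℝ) (h0 : 0 ≤ ξ) (h1 : ξ ≤ Real.pi) :
    HasSum (fun k : ℕ => (1 - Real.cos (((k : ℝ) + 1) * ξ)) / ((k : ℝ) + 1) ^ 2) (Qq ξ) := by
  have hpi := Real.pi_pos
  have hx : ξ / (2 * Real.pi) ∈ Set.Icc (0:ℝ) 1 := by
    constructor
    · positivity
    · rw [div_le_one (by positivity)]; linarith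
  have e1 := hasSum_one_div_nat_pow_mul_cos (k := 1) one_ne_zero hx
  have e0 := hasSum_one_div_nat_pow_mul_cos (k := 1) one_ne_zero (x := 0) ⟨le_rfl, zero_le_one⟩
  have e := e0.sub e1
  have hb : ∀ x : ℝ, (Polynomial.map (algebraMap ℚ ℝ) (Polynomial.bernoulli (2 * 1))).eval x = x ^ 2 - x + 6⁻¹ :=
    fun x => bernoulliFun_two x
  rw [hb, hb] at e
  rw [← hasSum_nat_add_iff' 1] at e
  have hv : ∀ v : ℝ, HasSum (fun n : ℕ => 1 / ((n + 1 : ℕ) : ℝ) ^ (2 * 1) * Real.cos (2 * Real.pi * ((n + 1 : ℕ) : ℝ) * 0) -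
      1 / ((n + 1 : ℕ) : ℝ) ^ (2 * 1) * Real.cos (2 * Real.pi * ((n + 1 : ℕ) : ℝ) * (ξ / (2 * Real.pi)))) v → v = Qq ξ →
      HasSum (fun k : ℕ => (1 - Real.cos (((k : ℝ) + 1) * ξ)) / ((k : ℝ) + 1) ^ 2) (Qq ξ) := by
    intro v h hv
    rw [← hv]
    refine (congrArg (fun f => HasSum f v) (funext fun k => ?_)).mpr h
    push_cast
    rw [show 2 * Real.pi * ((k:ℝ) + 1) * (ξ / (2 * Real.pi)) = ((k:ℝ) + 1) * ξ by field_simp]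
    rw [mul_zero, Real.cos_zero]
    ring
  refine hv _ e ?_
  simp [Qq, Nat.factorial]
  field_simp
  ring

lemma Qq_deriv (ξ : ℝ) : HasDerivAt Qq (Real.pi / 2 - ξ / 2) ξ := by
  unfold Qq
  have h1 := ((hasDerivAt_id ξ).const_mul Real.pi).div_const 2
  have h2 := ((hasDerivAt_id ξ).pow 2).div_const 4
  convert! h1.sub h2 using 1
  simp
  ring

lemma Qq_deriv2 (ξ : ℝ) : HasDerivAt (fun ξ : ℝ => Real.pi / 2 - ξ / 2) (-(1/2)) ξ := by
  have h1 := ((hasDerivAt_id ξ).div_const 2).const_sub (Real.pi / 2)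
  exact h1

lemma HB_eq_one : ∃ C, HB (sigma1 1) (1/2) C := by
  refine ⟨_, HB_limit (fun _ ξ => (1/2) * Qq ξ) _ ?_ ?_ _ (8 / √(1/4)) ?_⟩
  · intro j; unfold Qq; fun_prop
  · intro ξ hξ
    have : sigma1 1 ξ = (1/2) * Qq ξ := by
      rw [← (Qq_hasSum ξ hξ.1 hξ.2).tsum_eq, ← tsum_mul_left]
      unfold sigma1
      congr 1; ext k
      rw [sin_half, show (1:ℝ) + 1 = (2:ℕ) by norm_num, Real.rpow_natCast]
      ring
    rw [this]
    exact tendsto_const_nhds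
  · intro j
    apply HB_two _ (fun ξ => (1/2) * (Real.pi / 2 - ξ / 2)) (fun _ => (1/2) * (-(1/2)))
      (fun x => (Qq_deriv x).const_mul _) (fun x => (Qq_deriv2 x).const_mul _) continuous_const _ (by norm_num)
    intro x _
    norm_num

lemma mzero_int (α : ℝ) (h0 : 0 < α) (h1 : α < 1) (b : ℝ) (hb : 0 < b) :
    IntegrableOn (fun x : ℝ => x ^ (α - 2) * (1 - Real.exp (-(b * x)))) (Set.Ioi 0) := by
  rw [← Set.Ioc_union_Ioi_eq_Ioi zero_le_one, integrableOn_union]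
  have hm : Measurable (fun x : ℝ => x ^ (α - 2) * (1 - Real.exp (-(b * x)))) := by fun_prop
  have hnn : ∀ x : ℝ, 0 < x → 0 ≤ 1 - Real.exp (-(b * x)) := by
    intro x hx
    have : Real.exp (-(b * x)) ≤ 1 := Real.exp_le_one_iff.2 (by have := mul_pos hb hx; linarith)
    linarith
  constructor
  · have hrint : IntegrableOn (fun x : ℝ => x ^ (α - 1)) (Set.Ioc 0 1) :=
      (intervalIntegrable_iff_integrableOn_Ioc_of_le zero_le_one).1
        (intervalIntegral.intervalIntegrable_rpow' (by linarith))
    refine (hrint.mul_const b).mono' hm.aestronglyMeasurable ?_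
    filter_upwards [ae_restrict_mem measurableSet_Ioc] with x hx
    have hx0 := hx.1
    have := hnn x hx0
    rw [Real.norm_eq_abs, abs_of_nonneg (by positivity), show α - 1 = (α - 2) + 1 by ring,
      Real.rpow_add hx0, Real.rpow_one, mul_assoc]
    gcongr
    have := Real.add_one_le_exp (-(b * x))
    linarith
  · refine (integrableOn_Ioi_rpow_of_lt (show α - 2 < -1 by linarith) one_pos).mono' hm.aestronglyMeasurable ?_
    filter_upwards [ae_restrict_mem measurableSet_Ioi] with x hx
    have hx0 : (0:ℝ) < x := lt_trans one_pos hx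
    have := hnn x hx0
    have h2 := Real.exp_pos (-(b * x))
    rw [Real.norm_eq_abs, abs_of_nonneg (by positivity)]
    apply mul_le_of_le_one_right (by positivity)
    linarith

lemma HB_lt_one (α : ℝ) (h0 : 0 < α) (h1 : α < 1) : ∃ C, HB (sigma1 α) (1/2) C := by
  set β := α - 2 with hβ
  set F : ℝ → ℝ := fun x => x ^ β * (1 - Real.exp (-x)) with hF
  set C' := ∫ x in Set.Ioi 0, F x with hC'
  have hδ : ∀ j : ℕ, (0:ℝ) < 1 / ((j:ℝ) + 1) := fun j => by positivity
  have hδ1 : ∀ j : ℕ, 1 / ((j:ℝ) + 1) ≤ 1 := fun j => by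
    rw [div_le_one (by positivity)]; have : (0:ℝ) ≤ j := by positivity
    linarith
  have hlt : ∀ (b x : ℝ), 0 < b → 0 < x → 0 < 1 - Real.exp (-(b * x)) := by
    intro b x hb hx
    have : Real.exp (-(b * x)) < 1 := Real.exp_lt_one_iff.2 (by have := mul_pos hb hx; linarith)
    linarith
  have hFi : IntegrableOn F (Set.Ioi 0) := by simpa [hF] using mzero_int α h0 h1 1 one_pos
  have hCp : 0 < C' := by
    have h12 : 0 < ∫ x in (1:ℝ)..2, F x := by
      apply intervalIntegral.intervalIntegral_pos_of_pos_on
      · rw [intervalIntegrable_iff_integrableOn_Ioc_of_le one_le_two]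
        exact hFi.mono_set (fun x hx => lt_trans one_pos hx.1)
      · intro x hx
        have hx0 : 0 < x := lt_trans one_pos hx.1
        have := hlt 1 x one_pos hx0
        rw [one_mul] at this
        simp only [hF]
        positivity
      · norm_num
    refine lt_of_lt_of_le h12 (piece_lower 0 zero_le_one F F hFi ?_ ?_ (fun _ _ => le_rfl))
    · intro x hx
      have := hlt 1 x one_pos hx
      rw [one_mul] at this
      simp only [hF]
      positivity
    · exact (rpow_cont12 β).mul (by fun_prop)
  have hscale : ∀ k : ℕ, ∫ x in Set.Ioi 0, x ^ β * (1 - Real.exp (-(((k:ℝ) + 1) * x))) = ((k:ℝ) + 1) ^ (1 - α) * C' := by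
    intro k
    have hk : (0:ℝ) < (k:ℝ) + 1 := by positivity
    have h := integral_comp_mul_left_Ioi F 0 hk
    rw [mul_zero, ← hC'] at h
    have h2 : ∫ x in Set.Ioi 0, F (((k:ℝ) + 1) * x) =
        ((k:ℝ) + 1) ^ β * ∫ x in Set.Ioi 0, x ^ β * (1 - Real.exp (-(((k:ℝ) + 1) * x))) := by
      rw [← integral_const_mul]
      apply setIntegral_congr_fun measurableSet_Ioi
      intro x hx
      have hx0 : (0:ℝ) < x := hx
      simp only [hF]
      rw [Real.mul_rpow hk.le hx0.le]
      ring
    rw [h2, smul_eq_mul] at h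
    have h3 : ((k:ℝ) + 1) ^ (1 - α) * ((k:ℝ) + 1) ^ β = ((k:ℝ) + 1)⁻¹ := by
      rw [← Real.rpow_add hk, ← Real.rpow_neg_one]; congr 1; rw [hβ]; ring
    have h4 : (0:ℝ) < ((k:ℝ) + 1) ^ β := by positivity
    apply mul_left_cancel₀ h4.ne'
    rw [h, ← h3]
    ring
  set c := 1 / (2 * C') with hc
  have hcp : 0 < c := by positivity
  have hAint : ∀ j : ℕ, IntegrableOn (fun x : ℝ => x ^ β) (Set.Ioi (1 / ((j:ℝ) + 1))) := fun j =>
    integrableOn_Ioi_rpow_of_lt (by linarith) (hδ j)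
  set A : ℕ → ℝ := fun j => ∫ x in Set.Ioi (1 / ((j:ℝ) + 1)), x ^ β with hA
  have hm : ∀ j k : ℕ, A j - acoef β (1 / ((j:ℝ) + 1)) k =
      ∫ x in Set.Ioi (1 / ((j:ℝ) + 1)), x ^ β * (1 - Real.exp (-(((k:ℝ) + 1) * x))) := by
    intro j k
    rw [hA, acoef, ← integral_sub (hAint j) (acoef_int β _ (hδ j) k)]
    congr 1; ext x; ring
  have hm0 : ∀ j k : ℕ, 0 ≤ A j - acoef β (1 / ((j:ℝ) + 1)) k := by
    intro j k
    rw [hm]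
    apply setIntegral_nonneg measurableSet_Ioi
    intro x hx
    have hx0 : 0 < x := (hδ j).trans hx
    have := hlt _ x (show (0:ℝ) < (k:ℝ) + 1 by positivity) hx0
    positivity
  have hm1 : ∀ j k : ℕ, A j - acoef β (1 / ((j:ℝ) + 1)) k ≤ ((k:ℝ) + 1) ^ (1 - α) * C' := by
    intro j k
    rw [hm, ← hscale]
    apply setIntegral_mono_set (mzero_int α h0 h1 _ (by positivity))
    · filter_upwards [ae_restrict_mem measurableSet_Ioi] with x hx
      have hx0 : (0:ℝ) < x := hx
      have := hlt _ x (show (0:ℝ) < (k:ℝ) + 1 by positivity) hx0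
      simp only [Pi.zero_apply]
      positivity
    · exact (Set.Ioi_subset_Ioi (hδ j).le).eventuallyLE
  have hterm : ∀ k : ℕ, (((k:ℝ) + 1) ^ (1 - α) * C') / ((k:ℝ) + 1) ^ 2
      = C' * (1 / ((k:ℝ) + 1) ^ (1 + α)) := by
    intro k
    have hk : (0:ℝ) < (k:ℝ) + 1 := by positivity
    have : ((k:ℝ) + 1) ^ (1 - α) * ((k:ℝ) + 1) ^ (1 + α) = ((k:ℝ) + 1) ^ 2 := by
      rw [← Real.rpow_add hk, show 1 - α + (1 + α) = (2:ℕ) by push_cast; ring, Real.rpow_natCast]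
    field_simp
    linarith
  set D : ℝ := ∫ x in (1:ℝ)..2, x ^ β * (Real.sinh x / (2 * (Real.cosh x + 1))) with hD
  have hDc : ContinuousOn (fun x : ℝ => x ^ β * (Real.sinh x / (2 * (Real.cosh x + 1)))) (Set.Icc 1 2) := by
    apply (rpow_cont12 β).mul
    apply Continuous.continuousOn
    apply Continuous.div (by fun_prop) (by fun_prop)
    intro x
    have := Real.cosh_pos x
    positivity
  have hDp : 0 < D := by
    apply intervalIntegral.intervalIntegral_pos_of_pos_on
    · apply ContinuousOn.intervalIntegrable
      rw [Set.uIcc_of_le one_le_two]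
      exact hDc
    · intro x hx
      have hx0 : 0 < x := lt_trans one_pos hx.1
      have h1 := Real.sinh_pos_iff.2 hx0
      have := Real.cosh_pos x
      positivity
    · norm_num
  refine ⟨8 / √(c * D),
    HB_limit (fun j ξ => c * (A j * Qq ξ - Wf β (1 / ((j:ℝ) + 1)) ξ)) _ ?_ ?_ _ _ ?_⟩
  · intro j
    have : Continuous (Wf β (1 / ((j:ℝ) + 1))) :=
      continuous_iff_continuousAt.2 fun x => (Wf_deriv _ _ (hδ j) x).continuousAt
    have : Continuous Qq := by unfold Qq; fun_prop
    fun_prop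
  · intro ξ hξ
    have hsig : sigma1 α ξ = c * ∑' k : ℕ, (1 - Real.cos (((k : ℝ) + 1) * ξ)) *
        ((((k:ℝ) + 1) ^ (1 - α) * C') / ((k:ℝ) + 1) ^ 2) := by
      unfold sigma1
      rw [← tsum_mul_left]
      congr 1; ext k
      rw [hterm, sin_half, hc]
      field_simp
    rw [hsig]
    apply Tendsto.const_mul
    have hGs : ∀ j : ℕ, A j * Qq ξ - Wf β (1 / ((j:ℝ) + 1)) ξ = ∑' k : ℕ, (1 - Real.cos (((k : ℝ) + 1) * ξ)) *
        ((A j - acoef β (1 / ((j:ℝ) + 1)) k) / ((k:ℝ) + 1) ^ 2) := by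
      intro j
      have hQ := (Qq_hasSum ξ hξ.1 hξ.2)
      have hWs : Summable (fun k : ℕ => (1 - Real.cos (((k : ℝ) + 1) * ξ)) *
          (acoef β (1 / ((j:ℝ) + 1)) k / ((k : ℝ) + 1) ^ 2)) := by
        refine Summable.of_nonneg_of_le ?_ ?_ ((acoef_sum β _ (hδ j)).mul_left 2)
        · intro k
          have h1 := Real.cos_le_one (((k : ℝ) + 1) * ξ)
          have h3 := acoef_nonneg β _ (hδ j) k
          have h4 : 0 ≤ 1 - Real.cos (((k : ℝ) + 1) * ξ) := by linarith
          positivity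
        · intro k
          have h2 := Real.neg_one_le_cos (((k : ℝ) + 1) * ξ)
          have h3 := acoef_nonneg β _ (hδ j) k
          have h5 : acoef β (1 / ((j:ℝ) + 1)) k / ((k : ℝ) + 1) ^ 2 ≤ acoef β (1 / ((j:ℝ) + 1)) k := by
            apply div_le_self h3
            have : (0:ℝ) ≤ k := by positivity
            nlinarith
          have h6 : 0 ≤ acoef β (1 / ((j:ℝ) + 1)) k / ((k : ℝ) + 1) ^ 2 := by positivity
          apply mul_le_mul (by linarith) h5 h6 (by norm_num)
      rw [Wf, ← hQ.tsum_eq, ← tsum_mul_left, ← (hQ.summable.mul_left _).tsum_sub hWs]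
      congr 1; ext k
      ring
    simp only [hGs]
    apply tendsto_tsum_of_dominated_convergence
      (bound := fun k : ℕ => 2 * (C' * (1 / ((k:ℝ) + 1) ^ (1 + α))))
    · exact ((summable_shift _ (by linarith)).mul_left _).mul_left _
    · intro k
      have : Tendsto (fun j : ℕ => A j - acoef β (1 / ((j:ℝ) + 1)) k) atTop (𝓝 (((k:ℝ) + 1) ^ (1 - α) * C')) := by
        simp only [hm]
        rw [← hscale]
        exact delta_lim _ (mzero_int α h0 h1 _ (by positivity))
      exact (this.div_const _).const_mul _
    · refine Filter.Eventually.of_forall fun j k => ?_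
      have h1 := Real.cos_le_one (((k : ℝ) + 1) * ξ)
      have h2 := Real.neg_one_le_cos (((k : ℝ) + 1) * ξ)
      have h3 := hm0 j k
      have h4 : 0 ≤ 1 - Real.cos (((k : ℝ) + 1) * ξ) := by linarith
      rw [Real.norm_eq_abs, abs_of_nonneg (by positivity), ← hterm]
      gcongr
      · linarith
      · exact hm1 j k
  · intro j
    have hW2c := W2_cont β _ (hδ j)
    apply HB_two _ (fun ξ => c * (A j * (Real.pi / 2 - ξ / 2) - W1 β (1 / ((j:ℝ) + 1)) ξ))
      (fun ξ => c * (A j * (-(1/2)) - W2 β (1 / ((j:ℝ) + 1)) ξ))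
      (fun x => (((Qq_deriv x).const_mul _).sub (Wf_deriv _ _ (hδ j) x)).const_mul c)
      (fun x => (((Qq_deriv2 x).const_mul _).sub (W1_deriv _ _ (hδ j) x)).const_mul c)
      (by fun_prop) _ (by positivity)
    intro ξ hξ
    rw [← mul_neg]
    have key : D ≤ A j * (1/2) + W2 β (1 / ((j:ℝ) + 1)) ξ := by
      rw [hA, W2_eq β _ (hδ j)]
      rw [← integral_mul_const, ← integral_add ((hAint j).mul_const _) (Pk_int β _ (hδ j) ξ)]
      apply piece_lower _ (hδ1 j) (fun x => x ^ β * (1/2) + x ^ β * Pk x ξ) _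
        (((hAint j).mul_const _).add (Pk_int β _ (hδ j) ξ)) _ hDc
      · intro x hx
        have hx0 : 0 < x := lt_trans one_pos hx.1
        rw [← mul_add, half_add_Pk _ _ hx0]
        have h1 := Real.sinh_pos_iff.2 hx0
        have h3 := (cosh_gt x ξ hx0)
        have h5 := Real.neg_one_le_cos ξ
        gcongr
        linarith
      · intro x hx
        have hx0 : 0 < x := (hδ j).trans hx
        rw [← mul_add, half_add_Pk _ _ hx0]
        have h1 := Real.sinh_pos_iff.2 hx0
        have h3 := (cosh_gt x ξ hx0)
        positivity
    gcongr
    linarith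

lemma bdd_int {X : Type*} [MeasurableSpace X] (μ : Measure X) [IsFiniteMeasure μ] (f : X → ℂ)
    (hf : Measurable f) (M : ℝ) (hM : ∀ x, ‖f x‖ ≤ M) : Integrable f μ :=
  Integrable.of_bound hf.aestronglyMeasurable M (Filter.Eventually.of_forall hM)

lemma TTstar {X Y : Type} [MeasurableSpace X] [MeasurableSpace Y] (μ : Measure X) [IsFiniteMeasure μ]
    (ν : Measure Y) [IsFiniteMeasure ν] (k : Y → X → ℂ) (hk : Measurable (fun z : Y × X => k z.1 z.2))
    (hk1 : ∀ y x, ‖k y x‖ ≤ 1) (g : Y → ℂ) (hg : Measurable g) (M : ℝ) (hM : ∀ y, ‖g y‖ ≤ M)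
    (P : X → ℂ) (hP : Measurable P) (L : ℝ) (hL : ∀ x, ‖P x‖ ≤ L) :
    ‖∫ y, g y * ∫ x, k y x * P x ∂μ ∂ν‖ₑ ^ 2 ≤ ENNReal.ofReal (∫ x, ‖P x‖ ^ 2 ∂μ) *
      ∫⁻ y, ∫⁻ y', ‖g y‖ₑ * ‖g y'‖ₑ * ‖∫ x, k y x * (starRingEnd ℂ) (k y' x) ∂μ‖ₑ ∂ν ∂ν := by
  rcases isEmpty_or_nonempty Y with hY | ⟨⟨y0⟩⟩
  · simp [Measure.eq_zero_of_isEmpty ν]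
  rcases isEmpty_or_nonempty X with hX | ⟨⟨x0⟩⟩
  · simp [Measure.eq_zero_of_isEmpty μ]
  have hM0 : 0 ≤ M := (norm_nonneg _).trans (hM y0)
  have hL0 : 0 ≤ L := (norm_nonneg _).trans (hL x0)
  set H : X → ℂ := fun x => ∫ y, g y * k y x ∂ν with hH
  have hHm : Measurable H := by
    have : StronglyMeasurable (fun z : X × Y => g z.2 * k z.2 z.1) := by
      apply Measurable.stronglyMeasurable
      exact (hg.comp measurable_snd).mul (hk.comp measurable_swap)
    exact this.integral_prod_right.measurable
  have hHb : ∀ x, ‖H x‖ ≤ M * ν.real Set.univ := by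
    intro x
    apply norm_integral_le_of_norm_le_const
    refine Filter.Eventually.of_forall fun y => ?_
    rw [norm_mul]
    calc ‖g y‖ * ‖k y x‖ ≤ M * 1 := by gcongr; exacts [hM y, hk1 y x]
      _ = M := mul_one M
  have e1 : ∫ y, g y * ∫ x, k y x * P x ∂μ ∂ν = ∫ x, H x * P x ∂μ := by
    simp_rw [← integral_const_mul]
    rw [integral_integral_swap]
    · congr 1; ext x
      rw [hH, ← integral_mul_const]
      congr 1; ext y; ring
    · apply bdd_int _ _ _ (M * (1 * L))
      · rintro ⟨y, x⟩
        simp only [Function.uncurry, norm_mul]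
        gcongr
        exacts [hM y, hk1 y x, hL x]
      · exact (hg.comp measurable_fst).mul (hk.mul (hP.comp measurable_snd))
  have hHi : Integrable (fun x => H x) μ := bdd_int μ H hHm _ hHb
  have hH2 : MemLp H (ENNReal.ofReal 2) μ :=
    MemLp.of_bound hHm.aestronglyMeasurable _ (Filter.Eventually.of_forall hHb)
  have hP2 : MemLp P (ENNReal.ofReal 2) μ :=
    MemLp.of_bound hP.aestronglyMeasurable _ (Filter.Eventually.of_forall hL)
  have hcs := integral_mul_norm_le_Lp_mul_Lq (p := 2) (q := 2) ⟨by norm_num, by norm_num, by norm_num⟩ hH2 hP2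
  have hHH0 : 0 ≤ ∫ x, ‖H x‖ ^ 2 ∂μ := integral_nonneg fun x => by positivity
  have hPP0 : 0 ≤ ∫ x, ‖P x‖ ^ 2 ∂μ := integral_nonneg fun x => by positivity
  have e2 : ‖∫ x, H x * P x ∂μ‖ ^ 2 ≤ (∫ x, ‖P x‖ ^ 2 ∂μ) * ∫ x, ‖H x‖ ^ 2 ∂μ := by
    have h1 : ‖∫ x, H x * P x ∂μ‖ ≤ √(∫ x, ‖H x‖ ^ 2 ∂μ) * √(∫ x, ‖P x‖ ^ 2 ∂μ) := by
      refine (norm_integral_le_integral_norm _).trans ?_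
      simp_rw [norm_mul]
      refine hcs.trans (le_of_eq ?_)
      rw [Real.sqrt_eq_rpow, Real.sqrt_eq_rpow]
      norm_num
    calc ‖∫ x, H x * P x ∂μ‖ ^ 2 ≤ (√(∫ x, ‖H x‖ ^ 2 ∂μ) * √(∫ x, ‖P x‖ ^ 2 ∂μ)) ^ 2 := by gcongr
      _ = _ := by rw [mul_pow, Real.sq_sqrt hHH0, Real.sq_sqrt hPP0, mul_comm]
  have e3 : ((∫ x, ‖H x‖ ^ 2 ∂μ : ℝ) : ℂ) = ∫ y, ∫ y', g y * (starRingEnd ℂ) (g y') *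
      ∫ x, k y x * (starRingEnd ℂ) (k y' x) ∂μ ∂ν ∂ν := by
    rw [← integral_complex_ofReal]
    have h1 : ∀ x, ((‖H x‖ ^ 2 : ℝ) : ℂ) = ∫ y, g y * k y x * (starRingEnd ℂ) (H x) ∂ν := by
      intro x
      rw [integral_mul_const]
      change _ = H x * _
      rw [Complex.mul_conj, Complex.normSq_eq_norm_sq]
    simp_rw [h1]
    rw [integral_integral_swap]
    · congr 1; ext y
      have h2 : ∀ x, g y * k y x * (starRingEnd ℂ) (H x) =
          ∫ y', g y * (starRingEnd ℂ) (g y') * (k y x * (starRingEnd ℂ) (k y' x)) ∂ν := by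
        intro x
        rw [hH, ← integral_conj, ← integral_const_mul]
        congr 1; ext y'
        rw [map_mul]; ring
      simp_rw [h2]
      rw [integral_integral_swap]
      · congr 1; ext y'
        rw [integral_const_mul]
      · apply bdd_int _ _ _ (M * M * (1 * 1))
        · rintro ⟨x, y'⟩
          simp only [Function.uncurry, norm_mul, RCLike.norm_conj]
          gcongr
          exacts [hM y, hM y', hk1 y x, hk1 y' x]
        · have m1 : Measurable (fun x => k y x) := hk.comp measurable_prodMk_left
          have m2 : Measurable (fun z : X × Y => k z.2 z.1) := hk.comp measurable_swap
          exact (measurable_const.mul (Complex.continuous_conj.measurable.comp (hg.comp measurable_snd))).mul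
            ((m1.comp measurable_fst).mul (Complex.continuous_conj.measurable.comp m2))
    · apply bdd_int _ _ _ (M * 1 * (M * ν.real Set.univ))
      · rintro ⟨x, y⟩
        simp only [Function.uncurry, norm_mul, RCLike.norm_conj]
        gcongr
        exacts [hM y, hk1 y x, hHb x]
      · have m2 : Measurable (fun z : X × Y => k z.2 z.1) := hk.comp measurable_swap
        exact ((hg.comp measurable_snd).mul m2).mul (Complex.continuous_conj.measurable.comp (hHm.comp measurable_fst))
  have e4 : ENNReal.ofReal (∫ x, ‖H x‖ ^ 2 ∂μ) ≤
      ∫⁻ y, ∫⁻ y', ‖g y‖ₑ * ‖g y'‖ₑ * ‖∫ x, k y x * (starRingEnd ℂ) (k y' x) ∂μ‖ₑ ∂ν ∂ν := by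
    have h1 : ENNReal.ofReal (∫ x, ‖H x‖ ^ 2 ∂μ) = ‖((∫ x, ‖H x‖ ^ 2 ∂μ : ℝ) : ℂ)‖ₑ := by
      rw [← ofReal_norm, Complex.norm_real, Real.norm_of_nonneg hHH0]
    rw [h1, e3]
    refine (enorm_integral_le_lintegral_enorm _).trans ?_
    apply lintegral_mono
    intro y
    refine (enorm_integral_le_lintegral_enorm _).trans ?_
    apply lintegral_mono
    intro y'
    simp only [enorm_mul]
    rw [show ‖(starRingEnd ℂ) (g y')‖ₑ = ‖g y'‖ₑ from RCLike.enorm_conj _]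
  rw [e1]
  calc ‖∫ x, H x * P x ∂μ‖ₑ ^ 2 = ENNReal.ofReal (‖∫ x, H x * P x ∂μ‖ ^ 2) := by
        rw [ENNReal.ofReal_pow (norm_nonneg _), ofReal_norm]
    _ ≤ ENNReal.ofReal ((∫ x, ‖P x‖ ^ 2 ∂μ) * ∫ x, ‖H x‖ ^ 2 ∂μ) := ENNReal.ofReal_le_ofReal e2
    _ = ENNReal.ofReal (∫ x, ‖P x‖ ^ 2 ∂μ) * ENNReal.ofReal (∫ x, ‖H x‖ ^ 2 ∂μ) := ENNReal.ofReal_mul hPP0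
    _ ≤ _ := by gcongr

/-- normalized Lebesgue measure on the circle -/
def mu0 : Measure ℝ := ENNReal.ofReal ((2 * Real.pi)⁻¹) • volume.restrict (Set.Ioc (-Real.pi) Real.pi)

instance mu0_fin : IsFiniteMeasure mu0 := by
  constructor
  simp only [mu0, Measure.smul_apply, smul_eq_mul]
  exact ENNReal.mul_lt_top ENNReal.ofReal_lt_top (by simp)

/-- the oscillating exponential -/
def ee (α t : ℝ) (n : ℤ) (ξ : ℝ) : ℂ := Complex.exp (Complex.I * (((n : ℝ) * ξ - sigma1 α ξ * t) : ℝ))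

lemma mu0_integral (f : ℝ → ℂ) : ∫ ξ, f ξ ∂mu0 = (2 * Real.pi)⁻¹ • ∫ ξ in (-Real.pi)..Real.pi, f ξ := by
  have := Real.pi_pos
  rw [mu0, integral_smul_measure, ENNReal.toReal_ofReal (by positivity),
    intervalIntegral.integral_of_le (by linarith)]

lemma Kker_eq (α t : ℝ) (n : ℤ) : Kker α t n = ∫ ξ, ee α t n ξ ∂mu0 := by
  rw [mu0_integral]; rfl

lemma ee_norm (α t : ℝ) (n : ℤ) (ξ : ℝ) : ‖ee α t n ξ‖ = 1 := by
  rw [ee, mul_comm, Complex.norm_exp_ofReal_mul_I]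

lemma ee_conj (α t : ℝ) (n : ℤ) (ξ : ℝ) : (starRingEnd ℂ) (ee α t n ξ) = ee α (-t) (-n) ξ := by
  rw [ee, ee, ← Complex.exp_conj, map_mul, Complex.conj_I, Complex.conj_ofReal]
  congr 1
  push_cast
  ring

lemma ee_mul (α t s : ℝ) (n m : ℤ) (ξ : ℝ) : ee α t n ξ * ee α s m ξ = ee α (t + s) (n + m) ξ := by
  rw [ee, ee, ee, ← Complex.exp_add]
  congr 1
  push_cast
  ring

lemma ee_cont (α : ℝ) (hα : 0 < α) (n : ℤ) : Continuous (fun z : ℝ × ℝ => ee α z.1 n z.2) := by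
  unfold ee
  have := sigma1_cont α hα
  fun_prop

lemma ee_meas {Y : Type} [MeasurableSpace Y] (α : ℝ) (hα : 0 < α) (t : Y → ℝ) (ht : Measurable t)
    (n : Y → ℤ) (hn : Measurable n) : Measurable (fun z : Y × ℝ => ee α (t z.1) (n z.1) z.2) := by
  unfold ee
  have h1 := (sigma1_cont α hα).measurable
  have h2 : Measurable (fun z : Y × ℝ => ((n z.1 : ℤ) : ℝ)) :=
    (measurable_from_top (f := fun k : ℤ => (k : ℝ))).comp (hn.comp measurable_fst)
  fun_prop

lemma Kker_zero (α : ℝ) (n : ℤ) : Kker α 0 n = if n = 0 then 1 else 0 := by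
  have hpi := Real.pi_pos
  unfold Kker
  split_ifs with h
  · subst h
    simp
    norm_cast
    field_simp
    norm_num
  · have hc : (Complex.I * n) ≠ 0 := by simp [h]
    have : ∀ ξ : ℝ, Complex.exp (Complex.I * (((n : ℝ) * ξ - sigma1 α ξ * 0) : ℝ)) =
        Complex.exp ((Complex.I * n) * ξ) := by
      intro ξ; congr 1; push_cast; ring
    simp_rw [this]
    rw [integral_exp_mul_complex hc]
    have h2 : Complex.exp (Complex.I * n * (Real.pi : ℝ)) = Complex.exp (Complex.I * n * ((-Real.pi : ℝ) : ℂ)) := by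
      rw [Complex.exp_eq_exp_iff_exists_int]
      refine ⟨n, ?_⟩
      push_cast; ring
    rw [h2]; simp

/-- the truncated evolution -/
def uS (α : ℝ) (φ : ℤ → ℂ) (S : Finset ℤ) (t : ℝ) (n : ℤ) : ℂ := ∑ m ∈ S, Kker α t (n - m) * φ m

/-- trigonometric polynomial -/
def PS (φ : ℤ → ℂ) (S : Finset ℤ) (ξ : ℝ) : ℂ := ∑ m ∈ S, φ m * ee 1 0 (-m) ξ

lemma ee_zero (α β : ℝ) (n : ℤ) (ξ : ℝ) : ee α 0 n ξ = ee β 0 n ξ := by simp [ee]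

lemma ee_integrable (α : ℝ) (hα : 0 < α) (t : ℝ) (n : ℤ) : Integrable (ee α t n) mu0 := by
  apply bdd_int _ _ _ 1 (fun x => (ee_norm α t n x).le)
  exact ((ee_cont α hα n).comp (Continuous.prodMk_right t)).measurable

lemma PS_meas (φ : ℤ → ℂ) (S : Finset ℤ) : Measurable (PS φ S) := by
  unfold PS
  apply Finset.measurable_sum
  intro m _
  exact measurable_const.mul ((ee_cont 1 one_pos (-m)).comp (Continuous.prodMk_right 0)).measurable

lemma PS_bdd (φ : ℤ → ℂ) (S : Finset ℤ) (ξ : ℝ) : ‖PS φ S ξ‖ ≤ ∑ m ∈ S, ‖φ m‖ := by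
  unfold PS
  refine (norm_sum_le _ _).trans (le_of_eq ?_)
  congr 1; ext m
  rw [norm_mul, ee_norm, mul_one]

lemma uS_eq (α : ℝ) (hα : 0 < α) (φ : ℤ → ℂ) (S : Finset ℤ) (t : ℝ) (n : ℤ) :
    uS α φ S t n = ∫ ξ, ee α t n ξ * PS φ S ξ ∂mu0 := by
  have : ∀ ξ, ee α t n ξ * PS φ S ξ = ∑ m ∈ S, ee α t (n - m) ξ * φ m := by
    intro ξ
    rw [PS, Finset.mul_sum]
    congr 1; ext m
    rw [ee_zero 1 α, mul_left_comm, ee_mul, add_zero, sub_eq_add_neg, mul_comm]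
  simp_rw [this]
  rw [integral_finsetSum _ (fun m _ => (ee_integrable α hα t (n - m)).mul_const _)]
  simp_rw [integral_mul_const, ← Kker_eq]
  rfl

lemma PS_L2 (φ : ℤ → ℂ) (S : Finset ℤ) : ∫ ξ, ‖PS φ S ξ‖ ^ 2 ∂mu0 = ∑ m ∈ S, ‖φ m‖ ^ 2 := by
  have key : ((∫ ξ, ‖PS φ S ξ‖ ^ 2 ∂mu0 : ℝ) : ℂ) = ((∑ m ∈ S, ‖φ m‖ ^ 2 : ℝ) : ℂ) := by
    rw [← integral_complex_ofReal]
    have h1 : ∀ ξ, ((‖PS φ S ξ‖ ^ 2 : ℝ) : ℂ) = ∑ m ∈ S, ∑ m' ∈ S,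
        ee 1 0 (m' - m) ξ * (φ m * (starRingEnd ℂ) (φ m')) := by
      intro ξ
      rw [← Complex.normSq_eq_norm_sq, ← Complex.mul_conj]
      rw [PS, map_sum, Finset.sum_mul_sum]
      congr 1; ext m; congr 1; ext m'
      have := ee_mul 1 0 0 (-m) m' ξ
      rw [map_mul, ee_conj, neg_neg, neg_zero, show m' - m = -m + m' by ring, ← add_zero (0:ℝ), ← this, add_zero]
      ring
    simp_rw [h1]
    rw [integral_finsetSum _ (fun m _ => integrable_finsetSum _ fun m' _ => (ee_integrable 1 one_pos 0 (m' - m)).mul_const _)]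
    push_cast
    apply Finset.sum_congr rfl
    intro m hm
    rw [integral_finsetSum _ (fun m' _ => (ee_integrable 1 one_pos 0 (m' - m)).mul_const _)]
    simp_rw [integral_mul_const, ← Kker_eq, Kker_zero]
    rw [Finset.sum_eq_single m]
    · simp [Complex.mul_conj, Complex.normSq_eq_norm_sq]
    · intro b _ hb
      simp [sub_eq_zero, hb]
    · intro h; exact absurd hm h
  exact_mod_cast key

lemma TTu {Y : Type} [MeasurableSpace Y] (ν : Measure Y) [IsFiniteMeasure ν] (α : ℝ) (hα : 0 < α)
    (φ : ℤ → ℂ) (S : Finset ℤ) (t : Y → ℝ) (ht : Measurable t) (n : Y → ℤ) (hn : Measurable n)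
    (g : Y → ℂ) (hg : Measurable g) (M : ℝ) (hM : ∀ y, ‖g y‖ ≤ M) :
    ‖∫ y, g y * uS α φ S (t y) (n y) ∂ν‖ₑ ^ 2 ≤ ENNReal.ofReal (∑ m ∈ S, ‖φ m‖ ^ 2) *
      ∫⁻ y, ∫⁻ y', ‖g y‖ₑ * ‖g y'‖ₑ * ‖Kker α (t y - t y') (n y - n y')‖ₑ ∂ν ∂ν := by
  have h := TTstar mu0 ν (fun y ξ => ee α (t y) (n y) ξ) (ee_meas α hα t ht n hn) (fun y x => (ee_norm _ _ _ _).le)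
    g hg M hM (PS φ S) (PS_meas φ S) _ (PS_bdd φ S)
  rw [PS_L2] at h
  simp_rw [← uS_eq α hα, ee_conj, ee_mul, ← Kker_eq, ← sub_eq_add_neg] at h
  exact h

lemma uS_bdd (α : ℝ) (φ : ℤ → ℂ) (hα : 0 < α) (S : Finset ℤ) (t : ℝ) (n : ℤ) :
    ‖uS α φ S t n‖ ≤ mu0.real Set.univ * ∑ m ∈ S, ‖φ m‖ := by
  rw [uS_eq α hα, mul_comm]
  apply norm_integral_le_of_norm_le_const
  refine Filter.Eventually.of_forall fun ξ => ?_
  rw [norm_mul, ee_norm, one_mul]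
  exact PS_bdd φ S ξ

lemma uS_contr (α : ℝ) (hα : 0 < α) (φ : ℤ → ℂ) (S F : Finset ℤ) (t : ℝ) :
    ∑ n ∈ F, ‖uS α φ S t n‖ ^ 2 ≤ ∑ m ∈ S, ‖φ m‖ ^ 2 := by
  set ν : Measure ℤ := Measure.count.restrict (F : Set ℤ) with hν
  have : IsFiniteMeasure ν := ⟨by rw [hν]; simp⟩
  have h := TTu ν α hα φ S (fun _ => t) measurable_const id measurable_id
    (fun n => (starRingEnd ℂ) (uS α φ S t n)) measurable_from_top _
    (fun n => by rw [RCLike.norm_conj]; exact uS_bdd α φ hα S t n)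
  simp only [id, sub_self, Kker_zero, sub_eq_zero] at h
  rw [hν, lintegral_finset] at h
  simp_rw [lintegral_finset] at h
  simp only [Measure.count_singleton, mul_one] at h
  rw [setIntegral_finset] at h
  set B : ℝ := ∑ n ∈ F, ‖uS α φ S t n‖ ^ 2 with hB
  have hB0 : 0 ≤ B := Finset.sum_nonneg fun n _ => by positivity
  have h1 : (∑ x ∈ F, Measure.count.real {x} • ((starRingEnd ℂ) (uS α φ S t x) * uS α φ S t x)) = (B : ℂ) := by
    rw [hB]; push_cast
    apply Finset.sum_congr rfl
    intro n _
    rw [mul_comm, Complex.mul_conj, Complex.normSq_eq_norm_sq]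
    simp
  have h2 : ∑ x ∈ F, ∑ y ∈ F, ‖(starRingEnd ℂ) (uS α φ S t x)‖ₑ * ‖(starRingEnd ℂ) (uS α φ S t y)‖ₑ *
      ‖(if x = y then 1 else 0 : ℂ)‖ₑ = ENNReal.ofReal B := by
    rw [hB, ENNReal.ofReal_sum_of_nonneg (fun n _ => by positivity)]
    apply Finset.sum_congr rfl
    intro n hn
    rw [Finset.sum_eq_single n]
    · rw [RCLike.enorm_conj, ENNReal.ofReal_pow (norm_nonneg _), ofReal_norm]
      simp [sq]
    · intro b _ hb
      simp [hb.symm]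
    · intro h; exact absurd hn h
  rw [h1, h2, ← ofReal_norm, Complex.norm_real, Real.norm_of_nonneg hB0, ← ENNReal.ofReal_pow hB0,
    ← ENNReal.ofReal_mul (Finset.sum_nonneg fun n _ => by positivity),
    ENNReal.ofReal_le_ofReal_iff (mul_nonneg (Finset.sum_nonneg fun n _ => by positivity) hB0)] at h
  rcases hB0.eq_or_lt with h3 | h3
  · rw [← h3]; exact Finset.sum_nonneg fun n _ => by positivity
  · rw [sq] at h
    exact le_of_mul_le_mul_right h h3
  · rw [IntegrableOn, ← hν]
    exact bdd_int _ _ measurable_from_top (_ * _) (fun n => by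
      rw [norm_mul, RCLike.norm_conj]
      exact mul_le_mul (uS_bdd α φ hα S t n) (uS_bdd α φ hα S t n) (norm_nonneg _)
        ((norm_nonneg _).trans (uS_bdd α φ hα S t n)))

lemma Kker_l2 (α : ℝ) (hα : 0 < α) (t : ℝ) : Summable (fun n : ℤ => ‖Kker α t n‖ ^ 2) := by
  apply summable_of_sum_le (c := 1) (fun n => by positivity)
  intro F
  have := uS_contr α hα (fun n => if n = 0 then 1 else 0) {0} F t
  simpa [uS] using this

lemma U_summable (α : ℝ) (hα : 0 < α) (φ : ℤ → ℂ) (hφ : Summable (fun n : ℤ => ‖φ n‖ ^ 2)) (t : ℝ) (n : ℤ) :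
    Summable (fun m : ℤ => Kker α t (n - m) * φ m) := by
  have h1 : Summable (fun m : ℤ => ‖Kker α t (n - m)‖ ^ 2) :=
    (Kker_l2 α hα t).comp_injective (i := fun m : ℤ => n - m) (fun a b h => by simpa using h)
  apply Summable.of_norm_bounded (h1.add hφ)
  intro m
  rw [norm_mul]
  nlinarith [sq_nonneg (‖Kker α t (n - m)‖ - ‖φ m‖), sq_nonneg (‖Kker α t (n - m)‖ + ‖φ m‖)]

/-- symmetric truncations -/
def SJ (j : ℕ) : Finset ℤ := Finset.Icc (-(j:ℤ)) j

lemma SJ_tendsto : Tendsto SJ atTop atTop := by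
  apply tendsto_atTop_finset_of_monotone
  · intro i j h
    apply Finset.Icc_subset_Icc <;> simp [h]
  · intro x
    refine ⟨x.natAbs, ?_⟩
    simp only [SJ, Finset.mem_Icc]
    omega

lemma uS_lim (α : ℝ) (hα : 0 < α) (φ : ℤ → ℂ) (hφ : Summable (fun n : ℤ => ‖φ n‖ ^ 2)) (t : ℝ) (n : ℤ) :
    Tendsto (fun j => uS α φ (SJ j) t n) atTop (𝓝 (Uprop α t φ n)) :=
  (U_summable α hα φ hφ t n).hasSum.comp SJ_tendsto

lemma U_contr (α : ℝ) (hα : 0 < α) (φ : ℤ → ℂ) (hφ : Summable (fun n : ℤ => ‖φ n‖ ^ 2)) (t : ℝ) (F : Finset ℤ) :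
    ∑ n ∈ F, ‖Uprop α t φ n‖ ^ 2 ≤ ∑' m : ℤ, ‖φ m‖ ^ 2 := by
  have h : Tendsto (fun j => ∑ n ∈ F, ‖uS α φ (SJ j) t n‖ ^ 2) atTop (𝓝 (∑ n ∈ F, ‖Uprop α t φ n‖ ^ 2)) :=
    tendsto_finsetSum _ fun n _ => ((uS_lim α hα φ hφ t n).norm.pow 2)
  refine le_of_tendsto' h fun j => (uS_contr α hα φ (SJ j) F t).trans ?_
  exact hφ.sum_le_tsum _ fun m _ => by positivity

lemma Kker_cont (α : ℝ) (hα : 0 < α) (n : ℤ) : Continuous (fun t => Kker α t n) := by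
  simp_rw [Kker_eq]
  apply continuous_of_dominated (bound := fun _ => 1)
  · intro t; exact (ee_integrable α hα t n).aestronglyMeasurable
  · intro t; exact Filter.Eventually.of_forall fun x => (ee_norm α t n x).le
  · exact integrable_const 1
  · exact Filter.Eventually.of_forall fun x => (ee_cont α hα n).comp (Continuous.prodMk_left x)

lemma uS_cont (α : ℝ) (hα : 0 < α) (φ : ℤ → ℂ) (S : Finset ℤ) (n : ℤ) : Continuous (fun t => uS α φ S t n) := by
  unfold uS
  have := Kker_cont α hα
  fun_prop

lemma U_meas (α : ℝ) (hα : 0 < α) (φ : ℤ → ℂ) (hφ : Summable (fun n : ℤ => ‖φ n‖ ^ 2)) (n : ℤ) :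
    Measurable (fun t => Uprop α t φ n) :=
  measurable_of_tendsto_metrizable (fun j => (uS_cont α hα φ (SJ j) n).measurable)
    (tendsto_pi_nhds.2 fun t => uS_lim α hα φ hφ t n)
lemma hls_ball (lam : ℝ) (h1 : lam < 1) (t R : ℝ) (hR : 0 < R) :
    ∫⁻ s in Set.Ioo (t - R) (t + R), ‖t - s‖ₑ ^ (-lam) = ENNReal.ofReal (2 * R ^ (1 - lam) / (1 - lam)) := by
  have key : ∀ s, s ≠ t → ‖t - s‖ₑ ^ (-lam) = ENNReal.ofReal (|s - t| ^ (-lam)) := by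
    intro s hs
    have : 0 < |s - t| := abs_pos.mpr (sub_ne_zero.mpr hs)
    rw [← ENNReal.ofReal_rpow_of_pos this, ← Real.norm_eq_abs, ofReal_norm, ← enorm_neg, neg_sub]
  have hae : ∀ᵐ s ∂(volume : Measure ℝ), s ≠ t := by
    simp [ae_iff]
  have e1 : ∫⁻ s in Set.Ioo (t - R) (t + R), ‖t - s‖ₑ ^ (-lam)
      = ∫⁻ s in Set.Ioo (t - R) (t + R), ENNReal.ofReal (|s - t| ^ (-lam)) := by
    apply lintegral_congr_ae
    filter_upwards [ae_restrict_of_ae hae] with s hs using key s hs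
  rw [e1]
  have hintg : IntervalIntegrable (fun s : ℝ => |s| ^ (-lam)) volume (-R) R := by
    have h2 : IntervalIntegrable (fun s : ℝ => |s| ^ (-lam)) volume 0 R := by
      refine (intervalIntegral.intervalIntegrable_rpow' (r := -lam) (by linarith)).congr ?_
      intro s hs
      rw [Set.uIoc_of_le hR.le] at hs
      simp [abs_of_pos hs.1]
    have h3 : IntervalIntegrable (fun s : ℝ => |s| ^ (-lam)) volume (-R) 0 := by
      have := (IntervalIntegrable.iff_comp_neg (f := fun s : ℝ => |s| ^ (-lam)) (a := 0) (b := R)).1 h2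
      simpa using this.symm
    exact h3.trans h2
  have hval : ∫ s in (-R)..R, |s| ^ (-lam) = 2 * R ^ (1 - lam) / (1 - lam) := by
    have h2 : ∫ s in (0:ℝ)..R, |s| ^ (-lam) = R ^ (1 - lam) / (1 - lam) := by
      have : ∫ s in (0:ℝ)..R, |s| ^ (-lam) = ∫ s in (0:ℝ)..R, s ^ (-lam) := by
        apply intervalIntegral.integral_congr_ae
        refine Filter.Eventually.of_forall ?_
        intro s hs
        rw [Set.uIoc_of_le hR.le] at hs
        simp [abs_of_pos hs.1]
      rw [this, integral_rpow (Or.inl (by linarith))]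
      rw [show -lam + 1 = 1 - lam by ring, Real.zero_rpow (by linarith)]; simp
    have h3 : ∫ s in (-R)..0, |s| ^ (-lam) = R ^ (1 - lam) / (1 - lam) := by
      have := intervalIntegral.integral_comp_neg (fun s : ℝ => |s| ^ (-lam)) (a := 0) (b := R)
      simp only [abs_neg, neg_zero] at this
      rw [← this, h2]
    have hs1 : IntervalIntegrable (fun s : ℝ => |s| ^ (-lam)) volume (-R) 0 := by
      apply hintg.mono_set
      rw [Set.uIcc_of_le (by linarith), Set.uIcc_of_le (by linarith)]
      exact Set.Icc_subset_Icc le_rfl hR.le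
    have hs2 : IntervalIntegrable (fun s : ℝ => |s| ^ (-lam)) volume 0 R := by
      apply hintg.mono_set
      rw [Set.uIcc_of_le (by linarith), Set.uIcc_of_le (by linarith)]
      exact Set.Icc_subset_Icc (by linarith) le_rfl
    rw [← intervalIntegral.integral_add_adjacent_intervals hs1 hs2, h2, h3]; ring
  have hval2 : ∫ s in (t - R)..(t + R), |s - t| ^ (-lam) = 2 * R ^ (1 - lam) / (1 - lam) := by
    rw [intervalIntegral.integral_comp_sub_right (fun s : ℝ => |s| ^ (-lam)) t]
    simpa using hval
  have hint2 : IntervalIntegrable (fun s : ℝ => |s - t| ^ (-lam)) volume (t - R) (t + R) := by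
    have := hintg.comp_sub_right t
    convert this using 1 <;> ring
  rw [← hval2, intervalIntegral.integral_of_le (by linarith), integral_Ioc_eq_integral_Ioo]
  rw [ofReal_integral_eq_lintegral_ofReal]
  · exact ((intervalIntegrable_iff_integrableOn_Ioc_of_le (by linarith)).1 hint2).mono_set
      Set.Ioo_subset_Ioc_self
  · exact Filter.Eventually.of_forall (fun s => by positivity)

lemma hls_set (lam : ℝ) (h0 : 0 < lam) (h1 : lam < 1) (t : ℝ) (E : Set ℝ) :
    ∫⁻ s in E, ‖t - s‖ₑ ^ (-lam) ≤ ENNReal.ofReal (2 / (1 - lam) + 1) * (volume E) ^ (1 - lam) := by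
  have hl : 0 < 1 - lam := by linarith
  by_cases hz : volume E = 0
  · rw [Measure.restrict_eq_zero.2 hz]; simp
  by_cases hi : volume E = ⊤
  · rw [hi, ENNReal.top_rpow_of_pos hl, ENNReal.mul_top]
    · exact le_top
    · simp; positivity
  set R := (volume E).toReal with hRdef
  have hR : 0 < R := ENNReal.toReal_pos hz hi
  have hv : volume E = ENNReal.ofReal R := by rw [hRdef, ENNReal.ofReal_toReal hi]
  calc ∫⁻ s in E, ‖t - s‖ₑ ^ (-lam)
      ≤ ∫⁻ s in (Set.Ioo (t - R) (t + R)) ∪ (E ∩ (Set.Ioo (t - R) (t + R))ᶜ), ‖t - s‖ₑ ^ (-lam) := by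
        apply lintegral_mono_set
        intro s hs
        by_cases h : s ∈ Set.Ioo (t - R) (t + R)
        · exact Or.inl h
        · exact Or.inr ⟨hs, h⟩
    _ ≤ (∫⁻ s in Set.Ioo (t - R) (t + R), ‖t - s‖ₑ ^ (-lam))
        + ∫⁻ s in E ∩ (Set.Ioo (t - R) (t + R))ᶜ, ‖t - s‖ₑ ^ (-lam) := lintegral_union_le _ _ _
    _ ≤ ENNReal.ofReal (2 * R ^ (1 - lam) / (1 - lam)) + ENNReal.ofReal (R ^ (1 - lam)) := by
        gcongr
        · exact (hls_ball lam h1 t R hR).le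
        · have : ∀ s ∈ E ∩ (Set.Ioo (t - R) (t + R))ᶜ, ‖t - s‖ₑ ^ (-lam) ≤ ENNReal.ofReal (R ^ (-lam)) := by
            intro s hs
            rw [← ENNReal.ofReal_rpow_of_pos hR, ENNReal.rpow_neg, ENNReal.rpow_neg, ENNReal.inv_le_inv]
            apply ENNReal.rpow_le_rpow _ h0.le
            rw [← ofReal_norm]
            apply ENNReal.ofReal_le_ofReal
            rw [Real.norm_eq_abs]
            have := hs.2
            simp only [Set.mem_compl_iff, Set.mem_Ioo, not_and_or, not_lt] at this
            rcases this with h | h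
            · exact le_trans (by linarith) (le_abs_self _)
            · exact le_trans (by linarith) (neg_le_abs _)
          calc _ ≤ ∫⁻ s in E ∩ (Set.Ioo (t - R) (t + R))ᶜ, ENNReal.ofReal (R ^ (-lam)) :=
                setLIntegral_mono measurable_const this
            _ ≤ ENNReal.ofReal (R ^ (-lam)) * volume E := by
                rw [setLIntegral_const]; gcongr; exact Set.inter_subset_left
            _ = _ := by
                rw [hv, ← ENNReal.ofReal_mul (by positivity)]
                congr 1
                rw [show 1 - lam = -lam + 1 by ring, Real.rpow_add_one hR.ne']
    _ = _ := by
        rw [hv, ENNReal.ofReal_rpow_of_pos hR, ← ENNReal.ofReal_add (by positivity) (by positivity),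
          ← ENNReal.ofReal_mul (by positivity)]
        congr 1; field_simp

lemma hls (lam p : ℝ) (h0 : 0 < lam) (h1 : lam < 1) (hp : p * (2 - lam) = 2) :
    ∃ C : ℝ, 0 < C ∧ ∀ f : ℝ → ℝ, Measurable f → (∀ t, 0 ≤ f t) →
      ∫⁻ t, ∫⁻ s, ENNReal.ofReal (f t) * ENNReal.ofReal (f s) * ‖t - s‖ₑ ^ (-lam)
        ≤ ENNReal.ofReal C * (∫⁻ t, ENNReal.ofReal (f t ^ p)) ^ (2 - lam) := by
  have hl : 0 < 1 - lam := by linarith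
  have hp1 : 1 < p := by nlinarith
  have hp2 : p < 2 := by nlinarith
  refine ⟨2 * ((2 / (1 - lam) + 1) / (p - 1)), by
    have : 0 < p - 1 := by linarith
    positivity, ?_⟩
  intro f hf hf0
  set C0 := (2 / (1 - lam) + 1) with hC0
  have hC0p : 0 < C0 := by positivity
  set N := ∫⁻ t, ENNReal.ofReal (f t ^ p) with hN
  -- distribution bound
  have hcheb : ∀ a : ℝ, 0 < a → volume {s | a < f s} ≤ ENNReal.ofReal (a ^ (-p)) * N := by
    intro a ha
    have h2 := mul_meas_ge_le_lintegral (μ := (volume : Measure ℝ))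
      (f := fun t => ENNReal.ofReal (f t ^ p)) (by fun_prop) (ENNReal.ofReal (a ^ p))
    have h3 : volume {s | a < f s} ≤ volume {s | ENNReal.ofReal (a ^ p) ≤ ENNReal.ofReal (f s ^ p)} := by
      apply measure_mono
      intro s hs
      exact ENNReal.ofReal_le_ofReal (Real.rpow_le_rpow ha.le (le_of_lt hs) (by linarith))
    calc volume {s | a < f s} = ENNReal.ofReal (a ^ (-p)) * (ENNReal.ofReal (a ^ p) * volume {s | a < f s}) := by
          rw [← mul_assoc, ← ENNReal.ofReal_mul (by positivity), ← Real.rpow_add ha]; simp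
      _ ≤ ENNReal.ofReal (a ^ (-p)) * N := by
          gcongr
          exact le_trans (by gcongr) h2
  -- inner bound
  have hinner : ∀ t, ∫⁻ s, (if f s ≤ f t then ENNReal.ofReal (f s) * ‖t - s‖ₑ ^ (-lam) else 0)
      ≤ ENNReal.ofReal (C0 / (p - 1) * f t ^ (p - 1)) * N ^ (1 - lam) := by
    intro t
    have hrep : ∀ s, (if f s ≤ f t then ENNReal.ofReal (f s) * ‖t - s‖ₑ ^ (-lam) else 0)
        ≤ ∫⁻ a in Set.Ioo 0 (f t), ({z : ℝ × ℝ | z.2 < f z.1}.indicator (fun z => ‖t - z.1‖ₑ ^ (-lam))) (s, a) := by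
      intro s
      split_ifs with h
      · calc ENNReal.ofReal (f s) * ‖t - s‖ₑ ^ (-lam)
            = ∫⁻ a in Set.Ioo 0 (f s), ‖t - s‖ₑ ^ (-lam) := by
              rw [setLIntegral_const]; simp [mul_comm]
          _ = ∫⁻ a in Set.Ioo 0 (f s), ({z : ℝ × ℝ | z.2 < f z.1}.indicator (fun z => ‖t - z.1‖ₑ ^ (-lam))) (s, a) := by
              apply setLIntegral_congr_fun measurableSet_Ioo
              intro a ha
              simp [Set.indicator, ha.2]
          _ ≤ _ := by
              apply lintegral_mono_set
              exact Set.Ioo_subset_Ioo le_rfl h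
      · exact zero_le
    have hmeas : Measurable ({z : ℝ × ℝ | z.2 < f z.1}.indicator (fun z : ℝ × ℝ => ‖t - z.1‖ₑ ^ (-lam))) := by
      apply Measurable.indicator
      · fun_prop
      · exact measurableSet_lt measurable_snd (hf.comp measurable_fst)
    calc _ ≤ ∫⁻ s, ∫⁻ a in Set.Ioo 0 (f t), ({z : ℝ × ℝ | z.2 < f z.1}.indicator (fun z => ‖t - z.1‖ₑ ^ (-lam))) (s, a) :=
          lintegral_mono hrep
      _ = ∫⁻ a in Set.Ioo 0 (f t), ∫⁻ s, ({z : ℝ × ℝ | z.2 < f z.1}.indicator (fun z => ‖t - z.1‖ₑ ^ (-lam))) (s, a) := by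
          rw [lintegral_lintegral_swap]
          exact hmeas.aemeasurable
      _ ≤ ∫⁻ a in Set.Ioo 0 (f t), ENNReal.ofReal (C0 * a ^ (p - 2)) * N ^ (1 - lam) := by
          apply setLIntegral_mono' measurableSet_Ioo
          intro a ha
          have e1 : ∫⁻ s, ({z : ℝ × ℝ | z.2 < f z.1}.indicator (fun z => ‖t - z.1‖ₑ ^ (-lam))) (s, a)
              = ∫⁻ s in {s | a < f s}, ‖t - s‖ₑ ^ (-lam) := by
            rw [← lintegral_indicator (measurableSet_lt measurable_const hf)]
            rfl
          rw [e1]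
          refine (hls_set lam h0 h1 t _).trans ?_
          rw [ENNReal.ofReal_mul hC0p.le, mul_assoc]
          gcongr
          calc _ ≤ (ENNReal.ofReal (a ^ (-p)) * N) ^ (1 - lam) := by gcongr; exact hcheb a ha.1
            _ = _ := by
              have := ha.1
              rw [ENNReal.mul_rpow_of_nonneg _ _ hl.le, ENNReal.ofReal_rpow_of_pos (by positivity),
                ← Real.rpow_mul ha.1.le]
              congr 3
              linarith
      _ = ENNReal.ofReal (C0 / (p - 1) * f t ^ (p - 1)) * N ^ (1 - lam) := by
          rw [lintegral_mul_const _ (by fun_prop)]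
          congr 1
          rw [← ofReal_integral_eq_lintegral_ofReal]
          · congr 1
            rw [← integral_Ioc_eq_integral_Ioo, ← intervalIntegral.integral_of_le (hf0 t),
              intervalIntegral.integral_const_mul, integral_rpow (Or.inl (by linarith)),
              show p - 2 + 1 = p - 1 by ring, Real.zero_rpow (by linarith)]
            ring
          · refine Integrable.const_mul ?_ _
            have := intervalIntegral.intervalIntegrable_rpow' (a := 0) (b := f t) (r := p - 2) (by linarith)
            exact ((intervalIntegrable_iff_integrableOn_Ioc_of_le (hf0 t)).1 this).mono_set
              Set.Ioo_subset_Ioc_self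
          · filter_upwards [ae_restrict_mem measurableSet_Ioo] with a ha
            have := ha.1
            positivity
  have hhalf : ∫⁻ t, ∫⁻ s, ENNReal.ofReal (f t) * (if f s ≤ f t then ENNReal.ofReal (f s) * ‖t - s‖ₑ ^ (-lam) else 0)
      ≤ ENNReal.ofReal (C0 / (p - 1)) * N ^ (2 - lam) := by
    calc _ = ∫⁻ t, ENNReal.ofReal (f t) * ∫⁻ s, (if f s ≤ f t then ENNReal.ofReal (f s) * ‖t - s‖ₑ ^ (-lam) else 0) := by
          congr 1; ext t
          rw [lintegral_const_mul' _ _ ENNReal.ofReal_ne_top]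
      _ ≤ ∫⁻ t, ENNReal.ofReal (f t) * (ENNReal.ofReal (C0 / (p - 1) * f t ^ (p - 1)) * N ^ (1 - lam)) := by
          gcongr with t
          exact hinner t
      _ = ∫⁻ t, (ENNReal.ofReal (C0 / (p - 1)) * N ^ (1 - lam)) * ENNReal.ofReal (f t ^ p) := by
          congr 1; ext t
          have hp' : 0 < p - 1 := by linarith
          have : f t ^ p = f t * f t ^ (p - 1) := by
            rw [← Real.rpow_one_add' (hf0 t) (by linarith)]; congr 1; ring
          rw [this, ENNReal.ofReal_mul (by positivity), ENNReal.ofReal_mul (hf0 t)]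
          ring
      _ = _ := by
          rw [lintegral_const_mul _ (by fun_prop), ← hN, mul_assoc]
          congr 1
          rw [show 2 - lam = (1 - lam) + 1 by ring, ENNReal.rpow_add_of_nonneg _ _ hl.le zero_le_one]
          simp
  have hm2 : Measurable (fun z : ℝ × ℝ => ENNReal.ofReal (f z.1) * (if f z.2 ≤ f z.1 then ENNReal.ofReal (f z.2) * ‖z.1 - z.2‖ₑ ^ (-lam) else 0)) := by
    apply Measurable.mul (by fun_prop)
    apply Measurable.ite
    · exact measurableSet_le (by fun_prop) (by fun_prop)
    · fun_prop
    · fun_prop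
  calc _ ≤ ∫⁻ t, ∫⁻ s, (ENNReal.ofReal (f t) * (if f s ≤ f t then ENNReal.ofReal (f s) * ‖t - s‖ₑ ^ (-lam) else 0)
        + ENNReal.ofReal (f s) * (if f t ≤ f s then ENNReal.ofReal (f t) * ‖s - t‖ₑ ^ (-lam) else 0)) := by
        gcongr with t s
        rcases le_total (f s) (f t) with h | h
        · rw [if_pos h, mul_assoc]; exact le_self_add
        · rw [if_pos h, mul_assoc, ← enorm_neg (t - s), neg_sub, mul_left_comm]; exact le_add_self
    _ = (∫⁻ t, ∫⁻ s, ENNReal.ofReal (f t) * (if f s ≤ f t then ENNReal.ofReal (f s) * ‖t - s‖ₑ ^ (-lam) else 0))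
        + ∫⁻ t, ∫⁻ s, ENNReal.ofReal (f s) * (if f t ≤ f s then ENNReal.ofReal (f t) * ‖s - t‖ₑ ^ (-lam) else 0) := by
        rw [← lintegral_add_left]
        · congr 1; ext t
          rw [lintegral_add_left]
          exact hm2.comp (measurable_const.prodMk measurable_id)
        · exact hm2.lintegral_prod_right'
    _ ≤ ENNReal.ofReal (C0 / (p - 1)) * N ^ (2 - lam) + ENNReal.ofReal (C0 / (p - 1)) * N ^ (2 - lam) := by
        gcongr
        rw [lintegral_lintegral_swap]
        · exact hhalf
        · exact (hm2.comp measurable_swap).aemeasurable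
    _ = _ := by
        have : 0 < p - 1 := by linarith
        rw [← two_mul, ← mul_assoc, ENNReal.ofReal_mul (by norm_num)]; simp

lemma disp (α lam : ℝ) (hα : 0 < α) (h0 : 0 < lam) (h : (1 < α ∧ lam = 1/3) ∨ (α ≤ 1 ∧ lam = 1/2)) :
    ∃ C : ℝ, 0 < C ∧ ∀ (t : ℝ) (n : ℤ), ‖Kker α t n‖ₑ ≤ ENNReal.ofReal C * ‖t‖ₑ ^ (-lam) := by
  have : ∃ C, HB (sigma1 α) lam C := by
    rcases h with ⟨h1, rfl⟩ | ⟨h1, rfl⟩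
    · exact HB_gt_one α h1
    · rcases h1.lt_or_eq with h2 | rfl
      · exact HB_lt_one α hα h2
      · exact HB_eq_one
  obtain ⟨C, hC⟩ := this
  refine ⟨max C 1, by positivity, ?_⟩
  intro t n
  have hCp : 0 < ENNReal.ofReal (max C 1) := ENNReal.ofReal_pos.2 (by positivity)
  by_cases ht : t = 0
  · subst ht
    rw [enorm_zero, ENNReal.zero_rpow_of_neg (by linarith), ENNReal.mul_top hCp.ne']
    exact le_top
  · have h1 := Kker_bound α lam C hα hC t ht n
    have htp : 0 < |t| := abs_pos.2 ht
    have h2 : ‖Kker α t n‖ ≤ max C 1 * |t| ^ (-lam) := h1.trans (by gcongr; exact le_max_left _ _)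
    rw [← ofReal_norm, ← ofReal_norm, Real.norm_eq_abs, ENNReal.ofReal_rpow_of_pos htp,
      ← ENNReal.ofReal_mul (by positivity)]
    exact ENNReal.ofReal_le_ofReal h2

lemma sel_meas (u : ℝ → ℤ → ℂ) (hu : ∀ n, Measurable (fun t => u t n)) (n : ℝ → ℤ) (hn : Measurable n) :
    Measurable (fun t => u t (n t)) := by
  have : Measurable (fun z : ℝ × ℤ => u z.1 z.2) := measurable_from_prod_countable_left hu
  exact this.comp (measurable_id.prodMk hn)

lemma sel_trunc (α lam C0 C1 p : ℝ) (hα : 0 < α) (h0 : 0 < lam) (h1 : lam < 1) (hp : p * (2 - lam) = 2)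
    (hK : ∀ (t : ℝ) (n : ℤ), ‖Kker α t n‖ₑ ≤ ENNReal.ofReal C0 * ‖t‖ₑ ^ (-lam))
    (hC1 : ∀ f : ℝ → ℝ, Measurable f → (∀ t, 0 ≤ f t) →
      ∫⁻ t, ∫⁻ s, ENNReal.ofReal (f t) * ENNReal.ofReal (f s) * ‖t - s‖ₑ ^ (-lam)
        ≤ ENNReal.ofReal C1 * (∫⁻ t, ENNReal.ofReal (f t ^ p)) ^ (2 - lam))
    (φ : ℤ → ℂ) (S : Finset ℤ) (n : ℝ → ℤ) (hn : Measurable n) (T : ℝ) :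
    ∫⁻ t in Set.Icc (-T) T, ‖uS α φ S t (n t)‖ₑ ^ (2 / lam) ≤
      (ENNReal.ofReal (∑ m ∈ S, ‖φ m‖ ^ 2) * (ENNReal.ofReal C0 * ENNReal.ofReal C1)) ^ (1 / lam) := by
  set I := Set.Icc (-T) T with hI
  have hIm : MeasurableSet I := measurableSet_Icc
  set u : ℝ → ℂ := fun t => uS α φ S t (n t) with hu
  have hum : Measurable u := sel_meas _ (fun n => (uS_cont α hα φ S n).measurable) n hn
  set M := mu0.real Set.univ * ∑ m ∈ S, ‖φ m‖ with hM
  have hub : ∀ t, ‖u t‖ ≤ M := fun t => uS_bdd α φ hα S t (n t)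
  have hM0 : 0 ≤ M := (norm_nonneg _).trans (hub 0)
  set p0 := 2 / lam with hp0
  have hp02 : 2 < p0 := by rw [hp0, lt_div_iff₀ h0]; linarith
  have hpp : p = 2 / (2 - lam) := by rw [eq_div_iff (by linarith)]; exact hp
  have hppos : 0 < p := by rw [hpp]; apply div_pos <;> linarith
  have hexp : (p0 - 1) * p = p0 := by
    rw [hpp, hp0]
    have : 2 - lam ≠ 0 := by linarith
    field_simp
  set ν : Measure ℝ := volume.restrict I with hν
  have : IsFiniteMeasure ν := ⟨by rw [hν, hI]; simp⟩
  set f : ℝ → ℝ := I.indicator (fun t => ‖u t‖ ^ (p0 - 1)) with hf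
  set g : ℝ → ℂ := I.indicator (fun t => (starRingEnd ℂ) (u t) * ((‖u t‖ ^ (p0 - 2) : ℝ) : ℂ)) with hg
  have hfm : Measurable f := (hum.norm.pow_const _).indicator hIm
  have hf0 : ∀ t, 0 ≤ f t := fun t => Set.indicator_nonneg (fun x _ => by positivity) t
  have hgm : Measurable g := by
    refine Measurable.indicator ?_ hIm
    exact (Complex.continuous_conj.measurable.comp hum).mul
      (Complex.continuous_ofReal.measurable.comp (hum.norm.pow_const _))
  have hgf : ∀ t, ‖g t‖ = f t := by
    intro t
    simp only [hg, hf, Set.indicator]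
    split_ifs with h
    · rw [norm_mul, RCLike.norm_conj, Complex.norm_real, Real.norm_of_nonneg (by positivity),
        ← Real.rpow_one_add' (norm_nonneg _) (by linarith)]
      congr 1; ring
    · simp
  have hgu : ∀ t, g t * u t = ((f t ^ p : ℝ) : ℂ) := by
    intro t
    simp only [hg, hf, Set.indicator]
    split_ifs with h
    · rw [← Real.rpow_mul (norm_nonneg _), hexp, mul_right_comm, mul_comm _ (u t), Complex.mul_conj,
        Complex.normSq_eq_norm_sq, ← Complex.ofReal_mul, ← Real.rpow_natCast,
        ← Real.rpow_add' (norm_nonneg _) (by push_cast; linarith)]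
      congr 2; push_cast; ring
    · simp [Real.zero_rpow hppos.ne']
  have hfb : ∀ t, f t ≤ M ^ (p0 - 1) := by
    intro t
    simp only [hf, Set.indicator]
    split_ifs with h
    · exact Real.rpow_le_rpow (norm_nonneg _) (hub t) (by linarith)
    · positivity
  have hTT := TTu ν α hα φ S id measurable_id n hn g hgm (M ^ (p0 - 1)) (fun t => by rw [hgf]; exact hfb t)
  simp only [id] at hTT
  set Xe := ∫⁻ t, ENNReal.ofReal (f t ^ p) with hXe
  have hX1 : Xe = ∫⁻ t in I, ‖u t‖ₑ ^ p0 := by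
    rw [hXe, ← lintegral_indicator hIm]
    congr 1; ext t
    simp only [hf, Set.indicator]
    split_ifs with h
    · rw [← Real.rpow_mul (norm_nonneg _), hexp, ← ofReal_norm,
        ENNReal.ofReal_rpow_of_nonneg (norm_nonneg _) (by linarith)]
    · simp [Real.zero_rpow hppos.ne']
  have hX2 : Xe = ∫⁻ t, ENNReal.ofReal (f t ^ p) ∂ν := by
    rw [hXe, hν, ← lintegral_indicator hIm]
    congr 1; ext t
    by_cases h : t ∈ I
    · rw [Set.indicator_of_mem h]
    · rw [Set.indicator_of_notMem h]
      simp [hf, h, Real.zero_rpow hppos.ne']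
  have hintg : Integrable (fun t => f t ^ p) ν := by
    apply Integrable.of_bound (hfm.pow_const _).aestronglyMeasurable ((M ^ (p0 - 1)) ^ p)
    refine Filter.Eventually.of_forall fun t => ?_
    have := hf0 t
    rw [Real.norm_of_nonneg (by positivity)]
    exact Real.rpow_le_rpow this (hfb t) hppos.le
  have hX3 : ‖∫ t, g t * u t ∂ν‖ₑ = Xe := by
    have h3 : 0 ≤ ∫ t, f t ^ p ∂ν := integral_nonneg fun t => Real.rpow_nonneg (hf0 t) _
    simp_rw [hgu]
    rw [integral_complex_ofReal, ← ofReal_norm, Complex.norm_real, Real.norm_of_nonneg h3, hX2,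
      ofReal_integral_eq_lintegral_ofReal hintg (Filter.Eventually.of_forall fun t => Real.rpow_nonneg (hf0 t) _)]
  have hXtop : Xe ≠ ⊤ := by rw [← hX3]; exact enorm_ne_top
  have hD : ∫⁻ y, ∫⁻ y', ‖g y‖ₑ * ‖g y'‖ₑ * ‖Kker α (y - y') (n y - n y')‖ₑ ∂ν ∂ν ≤
      (ENNReal.ofReal C0 * ENNReal.ofReal C1) * Xe ^ (2 - lam) := by
    have hgf' : ∀ t, ‖g t‖ₑ = ENNReal.ofReal (f t) := fun t => by rw [← ofReal_norm, hgf]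
    calc ∫⁻ y, ∫⁻ y', ‖g y‖ₑ * ‖g y'‖ₑ * ‖Kker α (y - y') (n y - n y')‖ₑ ∂ν ∂ν
        ≤ ∫⁻ y, ∫⁻ y', ‖g y‖ₑ * ‖g y'‖ₑ * ‖Kker α (y - y') (n y - n y')‖ₑ :=
          (lintegral_mono' Measure.restrict_le_self fun y => lintegral_mono' Measure.restrict_le_self fun y' => le_rfl)
      _ ≤ ∫⁻ y, ∫⁻ y', ENNReal.ofReal C0 * (ENNReal.ofReal (f y) * ENNReal.ofReal (f y') * ‖y - y'‖ₑ ^ (-lam)) := by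
          apply lintegral_mono; intro y; apply lintegral_mono; intro y'
          simp only [hgf']
          rw [mul_left_comm (ENNReal.ofReal C0)]
          gcongr
          exact hK _ _
      _ = ENNReal.ofReal C0 * ∫⁻ y, ∫⁻ y', (ENNReal.ofReal (f y) * ENNReal.ofReal (f y') * ‖y - y'‖ₑ ^ (-lam)) := by
          rw [← lintegral_const_mul' _ _ ENNReal.ofReal_ne_top]
          congr 1; ext y
          rw [← lintegral_const_mul' _ _ ENNReal.ofReal_ne_top]
      _ ≤ ENNReal.ofReal C0 * (ENNReal.ofReal C1 * Xe ^ (2 - lam)) := by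
          gcongr
          exact hC1 f hfm hf0
      _ = _ := by rw [mul_assoc]
  rw [← hX1]
  have hfin : Xe ^ (2:ℕ) ≤ (ENNReal.ofReal (∑ m ∈ S, ‖φ m‖ ^ 2) * (ENNReal.ofReal C0 * ENNReal.ofReal C1)) * Xe ^ (2 - lam) := by
    rw [mul_assoc]
    rw [hX3] at hTT
    exact hTT.trans (by gcongr)
  by_cases hX0 : Xe = 0
  · rw [hX0]; exact zero_le
  · have e1 : Xe ^ (2:ℕ) = Xe ^ lam * Xe ^ (2 - lam) := by
      rw [← ENNReal.rpow_add _ _ hX0 hXtop, ← ENNReal.rpow_natCast]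
      congr 1; push_cast; ring
    rw [e1] at hfin
    have hne0 : Xe ^ (2 - lam) ≠ 0 := (ENNReal.rpow_pos (pos_iff_ne_zero.2 hX0) hXtop).ne'
    have hnet : Xe ^ (2 - lam) ≠ ⊤ := ENNReal.rpow_ne_top_of_nonneg (by linarith) hXtop
    have h5 := (ENNReal.mul_le_mul_iff_left hne0 hnet).1 hfin
    calc Xe = (Xe ^ lam) ^ (1 / lam) := by
          rw [← ENNReal.rpow_mul, mul_one_div_cancel h0.ne', ENNReal.rpow_one]
      _ ≤ _ := by gcongr

lemma sel_U (α lam : ℝ) (hα : 0 < α) (h0 : 0 < lam) (h1 : lam < 1)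
    (h : (1 < α ∧ lam = 1/3) ∨ (α ≤ 1 ∧ lam = 1/2)) :
    ∃ C : ℝ, 0 < C ∧ ∀ φ : ℤ → ℂ, Summable (fun n : ℤ => ‖φ n‖ ^ 2) → ∀ n : ℝ → ℤ, Measurable n →
      ∫⁻ t, ‖Uprop α t φ (n t)‖ₑ ^ (2 / lam) ≤ (ENNReal.ofReal (∑' m : ℤ, ‖φ m‖ ^ 2) * ENNReal.ofReal C) ^ (1 / lam) := by
  obtain ⟨C0, hC0, hK⟩ := disp α lam hα h0 h
  have hp : 2 / (2 - lam) * (2 - lam) = 2 := by have : 2 - lam ≠ 0 := by linarith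
                                                field_simp
  obtain ⟨C1, hC1, hH⟩ := hls lam _ h0 h1 hp
  refine ⟨C0 * C1, by positivity, ?_⟩
  intro φ hφ n hn
  rw [ENNReal.ofReal_mul hC0.le]
  set R := (ENNReal.ofReal (∑' m : ℤ, ‖φ m‖ ^ 2) * (ENNReal.ofReal C0 * ENNReal.ofReal C1)) ^ (1 / lam) with hR
  have hmeas : ∀ S, Measurable (fun t => ‖uS α φ S t (n t)‖ₑ ^ (2 / lam)) := fun S =>
    (sel_meas _ (fun n => (uS_cont α hα φ S n).measurable) n hn).enorm.pow_const _
  have hS : ∀ S, ∫⁻ t, ‖uS α φ S t (n t)‖ₑ ^ (2 / lam) ≤ R := by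
    intro S
    have hcov : AECover volume atTop (fun j : ℕ => Set.Icc (-(j:ℝ)) (j:ℝ)) :=
      aecover_Icc (tendsto_neg_atTop_atBot.comp tendsto_natCast_atTop_atTop) tendsto_natCast_atTop_atTop
    refine le_of_tendsto' (hcov.lintegral_tendsto_of_nat (hmeas S).aemeasurable) fun j => ?_
    refine (sel_trunc α lam C0 C1 _ hα h0 h1 hp hK hH φ S n hn j).trans ?_
    rw [hR]
    gcongr
    exact hφ.sum_le_tsum _ fun m _ => by positivity
  have hlim : ∀ t, ‖Uprop α t φ (n t)‖ₑ ^ (2 / lam) = liminf (fun j => ‖uS α φ (SJ j) t (n t)‖ₑ ^ (2 / lam)) atTop := by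
    intro t
    refine (Tendsto.liminf_eq ?_).symm
    exact (ENNReal.continuous_rpow_const.tendsto _).comp ((uS_lim α hα φ hφ t (n t)).enorm)
  simp_rw [hlim]
  refine (lintegral_liminf_le fun j => hmeas (SJ j)).trans ?_
  refine liminf_le_of_frequently_le' (Filter.Frequently.of_forall fun j => hS (SJ j))

lemma U_enorm_le (α : ℝ) (hα : 0 < α) (φ : ℤ → ℂ) (hφ : Summable (fun n : ℤ => ‖φ n‖ ^ 2)) (t : ℝ) (n : ℤ) :
    ‖Uprop α t φ n‖ₑ ≤ ENNReal.ofReal (√(∑' m : ℤ, ‖φ m‖ ^ 2)) := by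
  have := U_contr α hα φ hφ t {n}
  rw [Finset.sum_singleton] at this
  rw [← ofReal_norm]
  exact ENNReal.ofReal_le_ofReal (Real.le_sqrt_of_sq_le this)

lemma sup_U (α lam : ℝ) (hα : 0 < α) (h0 : 0 < lam) (h1 : lam < 1)
    (h : (1 < α ∧ lam = 1/3) ∨ (α ≤ 1 ∧ lam = 1/2)) :
    ∃ C : ℝ, 0 < C ∧ ∀ φ : ℤ → ℂ, Summable (fun n : ℤ => ‖φ n‖ ^ 2) →
      ∫⁻ t, (⨆ n, ‖Uprop α t φ n‖ₑ) ^ (2 / lam) ≤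
        ENNReal.ofReal C * ENNReal.ofReal (√(∑' m : ℤ, ‖φ m‖ ^ 2)) ^ (2 / lam) := by
  obtain ⟨C, hC, hs⟩ := sel_U α lam hα h0 h1 h
  refine ⟨2 ^ (2 / lam) * C ^ (1 / lam), by positivity, ?_⟩
  intro φ hφ
  set N2 := ∑' m : ℤ, ‖φ m‖ ^ 2 with hN2
  have hN0 : 0 ≤ N2 := tsum_nonneg fun m => by positivity
  set G : ℝ → ℝ≥0∞ := fun t => ⨆ n, ‖Uprop α t φ n‖ₑ with hG
  have hGm : Measurable G := Measurable.iSup fun n => (U_meas α hα φ hφ n).enorm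
  have hex : ∀ t, ∃ k : ℕ, G t ≤ 2 * ‖Uprop α t φ (Equiv.intEquivNat.symm k)‖ₑ := by
    intro t
    by_cases hz : G t = 0
    · exact ⟨0, by rw [hz]; exact zero_le⟩
    · have hlt : G t < ⊤ := lt_of_le_of_lt (iSup_le fun n => U_enorm_le α hα φ hφ t n) ENNReal.ofReal_lt_top
      have h2 : G t / 2 < ⨆ n, ‖Uprop α t φ n‖ₑ := ENNReal.half_lt_self hz hlt.ne
      obtain ⟨n, hn⟩ := lt_iSup_iff.1 h2
      refine ⟨Equiv.intEquivNat n, ?_⟩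
      rw [Equiv.symm_apply_apply]
      rw [ENNReal.div_lt_iff (by simp) (by simp)] at hn
      rw [mul_comm]
      exact hn.le
  classical
  set n : ℝ → ℤ := fun t => Equiv.intEquivNat.symm (Nat.find (hex t)) with hn
  have hnm : Measurable n := by
    refine (measurable_from_top (f := fun k : ℕ => Equiv.intEquivNat.symm k)).comp (measurable_find hex ?_)
    intro k
    exact measurableSet_le hGm ((U_meas α hα φ hφ _).enorm.const_mul 2)
  have hp0 : 0 ≤ 2 / lam := by positivity
  calc ∫⁻ t, G t ^ (2 / lam) ≤ ∫⁻ t, 2 ^ (2 / lam) * ‖Uprop α t φ (n t)‖ₑ ^ (2 / lam) := by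
        apply lintegral_mono
        intro t
        simp only
        rw [← ENNReal.mul_rpow_of_nonneg _ _ hp0]
        gcongr
        exact Nat.find_spec (hex t)
    _ = 2 ^ (2 / lam) * ∫⁻ t, ‖Uprop α t φ (n t)‖ₑ ^ (2 / lam) :=
        lintegral_const_mul' _ _ (ENNReal.rpow_ne_top_of_nonneg hp0 (by simp))
    _ ≤ 2 ^ (2 / lam) * (ENNReal.ofReal N2 * ENNReal.ofReal C) ^ (1 / lam) := by
        gcongr
        exact hs φ hφ n hnm
    _ = ENNReal.ofReal (2 ^ (2 / lam) * C ^ (1 / lam)) * ENNReal.ofReal (√N2) ^ (2 / lam) := by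
        rw [ENNReal.mul_rpow_of_nonneg _ _ (by positivity), ENNReal.ofReal_mul (by positivity),
          ← ENNReal.ofReal_rpow_of_pos two_pos, ENNReal.ofReal_ofNat, ← ENNReal.ofReal_rpow_of_pos hC]
        have : ENNReal.ofReal (√N2) ^ (2 / lam) = ENNReal.ofReal N2 ^ (1 / lam) := by
          rw [show 2 / lam = ((2:ℕ):ℝ) * (1 / lam) by push_cast; ring, ENNReal.rpow_mul, ENNReal.rpow_natCast,
            ← ENNReal.ofReal_pow (Real.sqrt_nonneg _), Real.sq_sqrt hN0]
        rw [this]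
        ring

lemma lr_bound (α : ℝ) (hα : 0 < α) (φ : ℤ → ℂ) (hφ : Summable (fun n : ℤ => ‖φ n‖ ^ 2)) (t : ℝ) (r : ℝ≥0∞)
    (hr : 2 ≤ r) (θ : ℝ) (hθ : θ = 2 * (1 / r).toReal) :
    lrNormZ r (Uprop α t φ) ≤ ENNReal.ofReal (√(∑' m : ℤ, ‖φ m‖ ^ 2)) ^ θ *
      (⨆ n, ‖Uprop α t φ n‖ₑ) ^ (1 - θ) := by
  set N2 := ∑' m : ℤ, ‖φ m‖ ^ 2 with hN2
  have hN0 : 0 ≤ N2 := tsum_nonneg fun m => by positivity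
  set G := ⨆ n, ‖Uprop α t φ n‖ₑ with hG
  unfold lrNormZ
  split_ifs with h
  · have : θ = 0 := by rw [hθ, h]; simp
    rw [this, ENNReal.rpow_zero, one_mul, sub_zero, ENNReal.rpow_one]
    exact le_rfl
  · set ρ := r.toReal with hρ
    have hρ2 : 2 ≤ ρ := by
      have := ENNReal.toReal_mono h hr
      simpa using this
    have hθ2 : θ = 2 / ρ := by rw [hθ, one_div, ENNReal.toReal_inv]; ring
    have hsum : ∑' n, ‖Uprop α t φ n‖ₑ ^ 2 ≤ ENNReal.ofReal (√N2) ^ 2 := by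
      rw [ENNReal.tsum_eq_iSup_sum]
      apply iSup_le
      intro F
      have := U_contr α hα φ hφ t F
      rw [← ENNReal.ofReal_pow (Real.sqrt_nonneg _), Real.sq_sqrt hN0]
      calc ∑ n ∈ F, ‖Uprop α t φ n‖ₑ ^ 2 = ENNReal.ofReal (∑ n ∈ F, ‖Uprop α t φ n‖ ^ 2) := by
            rw [ENNReal.ofReal_sum_of_nonneg (fun n _ => by positivity)]
            apply Finset.sum_congr rfl
            intro n _
            rw [ENNReal.ofReal_pow (norm_nonneg _), ofReal_norm]
        _ ≤ _ := ENNReal.ofReal_le_ofReal this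
    have h1 : ∑' n, ‖Uprop α t φ n‖ₑ ^ ρ ≤ G ^ (ρ - 2) * ENNReal.ofReal (√N2) ^ 2 := by
      calc ∑' n, ‖Uprop α t φ n‖ₑ ^ ρ ≤ ∑' n, G ^ (ρ - 2) * ‖Uprop α t φ n‖ₑ ^ 2 := by
            apply ENNReal.tsum_le_tsum
            intro n
            have : ‖Uprop α t φ n‖ₑ ^ ρ = ‖Uprop α t φ n‖ₑ ^ (ρ - 2) * ‖Uprop α t φ n‖ₑ ^ 2 := by
              rw [← ENNReal.rpow_natCast, ← ENNReal.rpow_add_of_nonneg _ _ (by linarith) (by positivity)]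
              congr 1; push_cast; ring
            rw [this]
            have h3 : ‖Uprop α t φ n‖ₑ ≤ G := le_iSup (fun n => ‖Uprop α t φ n‖ₑ) n
            gcongr
        _ = G ^ (ρ - 2) * ∑' n, ‖Uprop α t φ n‖ₑ ^ 2 := ENNReal.tsum_mul_left
        _ ≤ _ := by gcongr
    calc (∑' n, ‖Uprop α t φ n‖ₑ ^ ρ) ^ (1 / ρ) ≤ (G ^ (ρ - 2) * ENNReal.ofReal (√N2) ^ 2) ^ (1 / ρ) := by gcongr
      _ = _ := by
        rw [ENNReal.mul_rpow_of_nonneg _ _ (by positivity), ← ENNReal.rpow_natCast, ← ENNReal.rpow_mul,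
          ← ENNReal.rpow_mul, mul_comm, hθ2]
        congr 2
        · push_cast; ring
        · field_simp

lemma final (α lam : ℝ) (hα : 0 < α) (h0 : 0 < lam) (h1 : lam < 1)
    (h : (1 < α ∧ lam = 1/3) ∨ (α ≤ 1 ∧ lam = 1/2)) (q r : ℝ≥0∞) (hq : 2 ≤ q) (hr : 2 ≤ r)
    (hadm : ENNReal.ofReal (1 / lam) / q + 1 / r ≤ 1 / 2) :
    ∃ C : ℝ, 0 < C ∧
      ∀ φ : ℤ → ℂ, Summable (fun n : ℤ => ‖φ n‖ ^ 2) →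
        LqLrNorm q r (fun t => Uprop α t φ) ≤
          ENNReal.ofReal (C * Real.sqrt (∑' n : ℤ, ‖φ n‖ ^ 2)) := by
  obtain ⟨C, hC, hs⟩ := sup_U α lam hα h0 h1 h
  set θ : ℝ := 2 * (1 / r).toReal with hθ
  have hθ0 : 0 ≤ θ := by positivity
  have hrinv : (1 / r).toReal ≤ 1 / 2 := by
    have : 1 / r ≤ 1 / 2 := by gcongr
    have := ENNReal.toReal_mono (by simp) this
    simpa using this
  have hθ1 : θ ≤ 1 := by rw [hθ]; linarith
  by_cases hqt : q = ⊤
  · refine ⟨1, one_pos, ?_⟩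
    intro φ hφ
    rw [one_mul, LqLrNorm, if_pos hqt]
    refine essSup_le_of_ae_le _ ?_
    refine Filter.Eventually.of_forall fun t => ?_
    refine (lr_bound α hα φ hφ t r hr θ hθ).trans ?_
    set N := ENNReal.ofReal (√(∑' m : ℤ, ‖φ m‖ ^ 2))
    calc N ^ θ * (⨆ n, ‖Uprop α t φ n‖ₑ) ^ (1 - θ) ≤ N ^ θ * N ^ (1 - θ) := by
          gcongr
          exact iSup_le fun n => U_enorm_le α hα φ hφ t n
      _ = N := by
          rw [← ENNReal.rpow_add_of_nonneg _ _ hθ0 (by linarith), add_sub_cancel, ENNReal.rpow_one]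
  · set Q := q.toReal with hQ
    have hQ2 : 2 ≤ Q := by
      have := ENNReal.toReal_mono hqt hq
      simpa using this
    have hq0 : q ≠ 0 := (lt_of_lt_of_le (by simp) hq).ne'
    have hadm' : 2 / lam ≤ Q * (1 - θ) := by
      have h2 := ENNReal.toReal_mono (by simp) hadm
      have hr0 : r ≠ 0 := (lt_of_lt_of_le (by simp) hr).ne'
      rw [ENNReal.toReal_add (ENNReal.div_ne_top ENNReal.ofReal_ne_top hq0) (ENNReal.div_ne_top (by simp) hr0),
        ENNReal.toReal_div, ENNReal.toReal_ofReal (by positivity), ← hQ] at h2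
      have h3 : ((1:ℝ≥0∞) / 2).toReal = 1 / 2 := by simp
      rw [h3] at h2
      have h4 : 1 / lam / Q ≤ (1 - θ) / 2 := by rw [hθ]; linarith
      rw [div_le_iff₀ (by linarith)] at h4
      have : 2 / lam = 2 * (1 / lam) := by ring
      rw [this]; linarith
    refine ⟨C ^ (1 / Q), by positivity, ?_⟩
    intro φ hφ
    rw [LqLrNorm, if_neg hqt, ← hQ]
    set N := ENNReal.ofReal (√(∑' m : ℤ, ‖φ m‖ ^ 2)) with hN
    set G : ℝ → ℝ≥0∞ := fun t => ⨆ n, ‖Uprop α t φ n‖ₑ with hG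
    have hGN : ∀ t, G t ≤ N := fun t => iSup_le fun n => U_enorm_le α hα φ hφ t n
    set p0 := 2 / lam with hp0
    have hp0p : 0 < p0 := by positivity
    have hintg : ∫⁻ t, (lrNormZ r (Uprop α t φ)) ^ Q ≤ ENNReal.ofReal C * N ^ Q := by
      calc ∫⁻ t, (lrNormZ r (Uprop α t φ)) ^ Q ≤ ∫⁻ t, N ^ (Q - p0) * G t ^ p0 := by
            apply lintegral_mono
            intro t
            calc (lrNormZ r (Uprop α t φ)) ^ Q ≤ (N ^ θ * G t ^ (1 - θ)) ^ Q := by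
                  gcongr
                  exact lr_bound α hα φ hφ t r hr θ hθ
              _ = N ^ (θ * Q) * (G t ^ (Q * (1 - θ) - p0) * G t ^ p0) := by
                  rw [ENNReal.mul_rpow_of_nonneg _ _ (by linarith), ← ENNReal.rpow_mul, ← ENNReal.rpow_mul,
                    ← ENNReal.rpow_add_of_nonneg _ _ (by linarith) hp0p.le]
                  congr 2; ring
              _ ≤ N ^ (θ * Q) * (N ^ (Q * (1 - θ) - p0) * G t ^ p0) := by
                  gcongr
                  exact hGN t
              _ = N ^ (Q - p0) * G t ^ p0 := by
                  rw [← mul_assoc, ← ENNReal.rpow_add_of_nonneg _ _ (by positivity) (by linarith)]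
                  congr 2; ring
        _ = N ^ (Q - p0) * ∫⁻ t, G t ^ p0 := by
            apply lintegral_const_mul' 
            apply ENNReal.rpow_ne_top_of_nonneg _ ENNReal.ofReal_ne_top
            nlinarith
        _ ≤ N ^ (Q - p0) * (ENNReal.ofReal C * N ^ p0) := by
            gcongr
            exact hs φ hφ
        _ = ENNReal.ofReal C * N ^ Q := by
            rw [mul_left_comm, ← ENNReal.rpow_add_of_nonneg _ _ (by nlinarith) hp0p.le, sub_add_cancel]
    calc (∫⁻ t, (lrNormZ r (Uprop α t φ)) ^ Q) ^ (1 / Q) ≤ (ENNReal.ofReal C * N ^ Q) ^ (1 / Q) := by gcongr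
      _ = ENNReal.ofReal (C ^ (1 / Q)) * N := by
          rw [ENNReal.mul_rpow_of_nonneg _ _ (by positivity), ← ENNReal.rpow_mul,
            mul_one_div_cancel (by linarith), ENNReal.rpow_one, ENNReal.ofReal_rpow_of_pos hC]
      _ = _ := by rw [hN, ENNReal.ofReal_mul (by positivity)]

theorem stmt17 (α : ℝ) (hα : 0 < α) (q r : ℝ≥0∞)
    (hq : 2 ≤ q) (hr : 2 ≤ r)
    (hadmP : 1 < α → 3 / q + 1 / r ≤ 1 / 2)
    (hadmM : α ≤ 1 → 2 / q + 1 / r ≤ 1 / 2) :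
    ∃ C : ℝ, 0 < C ∧
      ∀ φ : ℤ → ℂ, Summable (fun n : ℤ => ‖φ n‖ ^ 2) →
        LqLrNorm q r (fun t => Uprop α t φ) ≤
          ENNReal.ofReal (C * Real.sqrt (∑' n : ℤ, ‖φ n‖ ^ 2)) := by
  rcases lt_or_ge 1 α with h | h
  · apply final α (1/3) hα (by norm_num) (by norm_num) (Or.inl ⟨h, rfl⟩) q r hq hr
    have : ENNReal.ofReal (1 / (1/3)) = 3 := by norm_num
    rw [this]
    exact hadmP h
  · apply final α (1/2) hα (by norm_num) (by norm_num) (Or.inr ⟨h, rfl⟩) q r hq hr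
    have : ENNReal.ofReal (1 / (1/2)) = 2 := by norm_num
    rw [this]
    exact hadmM h
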